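/- arXiv:math/0701439 — 12 statements merged into one kernel-verified Lean document; each statement's English description precedes it below -/
import Mathlib

section
/- Let n ≥ 2, 1 ≤ k ≤ n, 1 < p < ∞ and 0 < r < R. Let v be a continuously differentiable p-harmonic function on D_{r,∞} such that M(t) is finite for every t ≥ r and M(R) > M(r). If ∫_{D_{r,∞}} |v_{r,R}(x) − u(x)|² (|∇v_{r,R}(x)|^{|p−2|} + |∇u(x)|^{|p−2|}) dm(x) < ∞, then for all t ∈ (r, R) one has M(t) ≤ (M(R) − M(r))·u₀(t) + M(r). -/
open MeasureTheory Filter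
open scoped RealInnerProductSpace

/-- `d_k(x) = (∑_{i<k} x_i²)^{1/2}`. -/
noncomputable def dk (n k : ℕ) (x : EuclideanSpace ℝ (Fin n)) : ℝ :=
  Real.sqrt (∑ i ∈ Finset.univ.filter (fun i : Fin n => (i : ℕ) < k), x i ^ 2)

/-- The `k`-sphere `Σ_k(t) = {x : d_k(x) = t}`. -/
def SigmaK (n k : ℕ) (t : ℝ) : Set (EuclideanSpace ℝ (Fin n)) := {x | dk n k x = t}

/-- The domain `D_{r,∞} = {x : d_k(x) > r}`. -/
def DInf (n k : ℕ) (r : ℝ) : Set (EuclideanSpace ℝ (Fin n)) := {x | r < dk n k x}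

/-- `M(t)`: for `t = r` the limsup of `v(z)` as `z → Σ_k(r)` within `D_{r,∞}`,
and for `t ≠ r` the supremum of `v` over `Σ_k(t)`. -/
noncomputable def Mfun (n k : ℕ) (r : ℝ) (v : EuclideanSpace ℝ (Fin n) → ℝ) (t : ℝ) : ℝ :=
  if t = r then limsup v ((nhdsSet (SigmaK n k r)) ⊓ Filter.principal (DInf n k r))
  else sSup (v '' SigmaK n k t)

/-- `u₀(t) = ξ(r,t)/ξ(r,R)` with `ξ(r,t) = ∫_r^t s^{(1-k)/(p-1)} ds`. -/
noncomputable def u0 (k : ℕ) (p r R t : ℝ) : ℝ :=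
  (∫ s in r..t, s ^ ((1 - (k : ℝ)) / (p - 1))) / ∫ s in r..R, s ^ ((1 - (k : ℝ)) / (p - 1))

/-- The comparison function `u(x) = u₀(d_k(x))`. -/
noncomputable def uComp (n k : ℕ) (p r R : ℝ) (x : EuclideanSpace ℝ (Fin n)) : ℝ :=
  u0 k p r R (dk n k x)

/-- The normalized function `v_{r,R}(x) = (v(x) - M(r))/(M(R) - M(r))`. -/
noncomputable def vrR (n k : ℕ) (r R : ℝ) (v : EuclideanSpace ℝ (Fin n) → ℝ)
    (x : EuclideanSpace ℝ (Fin n)) : ℝ :=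
  (v x - Mfun n k r v r) / (Mfun n k r v R - Mfun n k r v r)

/-- The integrand `|v_{r,R} - u|² (|∇v_{r,R}|^{|p-2|} + |∇u|^{|p-2|})`. -/
noncomputable def Gfun (n k : ℕ) (p r R : ℝ) (v : EuclideanSpace ℝ (Fin n) → ℝ)
    (x : EuclideanSpace ℝ (Fin n)) : ℝ :=
  |vrR n k r R v x - uComp n k p r R x| ^ 2 *
    (‖gradient (vrR n k r R v) x‖ ^ |p - 2| + ‖gradient (uComp n k p r R) x‖ ^ |p - 2|)

/-- `v` is a weak solution of the `p`-Laplace equation on `Ω`. -/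
def IsPHarmonic (n : ℕ) (p : ℝ) (Ω : Set (EuclideanSpace ℝ (Fin n)))
    (v : EuclideanSpace ℝ (Fin n) → ℝ) : Prop :=
  ∀ φ : EuclideanSpace ℝ (Fin n) → ℝ, ContDiff ℝ (⊤ : ℕ∞) φ → HasCompactSupport φ →
    tsupport φ ⊆ Ω →
    ∫ x in Ω, ‖gradient v x‖ ^ (p - 2) * ⟪gradient v x, gradient φ x⟫ = 0

section Flux
variable {E : Type*} [NormedAddCommGroup E] [InnerProductSpace ℝ E]

/-- The `p`-Laplace flux `|a|^{p-2} a`. -/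
noncomputable def pFlux (p : ℝ) (a : E) : E := ‖a‖ ^ (p - 2) • a

lemma norm_pFlux {p : ℝ} (hp : 1 < p) (a : E) : ‖pFlux p a‖ = ‖a‖ ^ (p - 1) := by
  rcases eq_or_ne a 0 with rfl | ha
  · simp [pFlux, Real.zero_rpow (by linarith : p - 1 ≠ 0)]
  · have h : 0 < ‖a‖ := norm_pos_iff.2 ha
    rw [pFlux, norm_smul, Real.norm_of_nonneg (by positivity)]
    nth_rewrite 2 [← Real.rpow_one ‖a‖]
    rw [← Real.rpow_add h]
    congr 1
    ring

lemma continuous_pFlux {p : ℝ} (hp : 1 < p) : Continuous (pFlux p : E → E) := by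
  rw [continuous_iff_continuousAt]
  intro a
  rcases eq_or_ne a 0 with rfl | ha
  · rw [ContinuousAt, show pFlux p (0 : E) = 0 by simp [pFlux], tendsto_zero_iff_norm_tendsto_zero]
    simp_rw [norm_pFlux hp]
    have : Continuous fun a : E => ‖a‖ ^ (p - 1) :=
      continuous_norm.rpow_const fun _ => Or.inr (by linarith)
    simpa [Real.zero_rpow (by linarith : p - 1 ≠ 0)] using this.tendsto 0
  · exact (continuous_norm.continuousAt.rpow_const (Or.inl (norm_ne_zero_iff.2 ha))).smul
      continuousAt_id

lemma pFlux_injective {p : ℝ} (hp : 1 < p) : Function.Injective (pFlux p : E → E) := by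
  intro a b h
  have hn : ‖a‖ = ‖b‖ := by
    have := congrArg norm h
    rw [norm_pFlux hp, norm_pFlux hp] at this
    exact (Real.rpow_left_inj (norm_nonneg a) (norm_nonneg b) (by linarith)).1 this
  rcases eq_or_ne a 0 with rfl | ha
  · simpa [eq_comm] using hn
  · rw [pFlux, pFlux, ← hn] at h
    exact smul_right_injective E (Real.rpow_pos_of_pos (norm_pos_iff.2 ha) _).ne' h

lemma pFlux_smul {p c : ℝ} (hc : 0 < c) (a : E) :
    pFlux p (c • a) = c ^ (p - 1) • pFlux p a := by
  rw [pFlux, pFlux, norm_smul, Real.norm_of_nonneg hc.le,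
    Real.mul_rpow hc.le (norm_nonneg a), smul_smul, smul_smul]
  congr 1
  rw [show p - 1 = (p - 2) + 1 by ring, Real.rpow_add hc, Real.rpow_one]
  ring

lemma inner_smul_sub_smul_eq (m l : ℝ) (a b : E) :
    ⟪m • a - l • b, a - b⟫ =
      (m + l) / 2 * ‖a - b‖ ^ 2 + (m - l) / 2 * (‖a‖ ^ 2 - ‖b‖ ^ 2) := by
  rw [← real_inner_self_eq_norm_sq, ← real_inner_self_eq_norm_sq, ← real_inner_self_eq_norm_sq]
  simp only [inner_sub_left, inner_sub_right, real_inner_smul_left]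
  rw [real_inner_comm a b]
  ring

lemma half_add_rpow_mul_norm_sub_sq_le {q : ℝ} (hq : 0 ≤ q) {s t : ℝ} (hs : 0 ≤ s) (ht : 0 ≤ t)
    (a b : E) (hst : s ≤ t ↔ ‖a‖ ≤ ‖b‖) :
    (s ^ q + t ^ q) / 2 * ‖a - b‖ ^ 2 ≤ ⟪s ^ q • a - t ^ q • b, a - b⟫ := by
  rw [inner_smul_sub_smul_eq]
  have : 0 ≤ (s ^ q - t ^ q) * (‖a‖ ^ 2 - ‖b‖ ^ 2) := by
    rcases le_total s t with h | h
    · have h1 := Real.rpow_le_rpow hs h hq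
      have h2 := pow_le_pow_left₀ (norm_nonneg a) (hst.1 h) 2
      exact mul_nonneg_of_nonpos_of_nonpos (by linarith) (by linarith)
    · have h1 := Real.rpow_le_rpow ht h hq
      rcases eq_or_lt_of_le h with h' | h'
      · simp [h']
      · have h2 := pow_le_pow_left₀ (norm_nonneg b)
          (not_le.1 (fun h'' => absurd (hst.2 h'') (not_le.2 h'))).le 2
        exact mul_nonneg (by linarith) (by linarith)
  linarith

lemma rpow_sub_rpow_mul_le {q s t : ℝ} (hq : 0 ≤ q) (ht : 0 ≤ t) (hts : t ≤ s) :
    (s ^ q - t ^ q) * t ≤ (q + 1) * s ^ q * (s - t) := by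
  rcases eq_or_lt_of_le ht with rfl | ht
  · have : 0 ≤ s ^ q := Real.rpow_nonneg hts _
    simp; positivity
  have hs : 0 < s := ht.trans_le hts
  have hx : 0 < t / s := by positivity
  have hx1 : t / s ≤ 1 := (div_le_one hs).2 hts
  have key : 1 + (q + 1) * (t / s - 1) ≤ (t / s) ^ (q + 1) := by
    have := one_add_mul_self_le_rpow_one_add (s := t / s - 1) (by linarith) (p := q + 1)
      (by linarith)
    simpa using this
  rw [Real.rpow_add_one hx.ne', Real.div_rpow ht.le hs.le] at key
  have hsq : 0 < s ^ q := Real.rpow_pos_of_pos hs _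
  have h3 := mul_le_mul_of_nonneg_left key (mul_pos hsq hs).le
  have e1 : s ^ q * s * (1 + (q + 1) * (t / s - 1)) = s ^ q * s + (q + 1) * s ^ q * (t - s) := by
    field_simp
  have e2 : s ^ q * s * (t ^ q / s ^ q * (t / s)) = t ^ q * t := by
    field_simp
  rw [e1, e2] at h3
  nlinarith

lemma norm_pFlux_sub_le {p : ℝ} (hp : 2 ≤ p) (a b : E) :
    ‖pFlux p a - pFlux p b‖ ≤ p * (‖a‖ ^ (p - 2) + ‖b‖ ^ (p - 2)) * ‖a - b‖ := by
  wlog h : ‖b‖ ≤ ‖a‖ generalizing a b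
  · have := this b a (le_of_not_ge h)
    rwa [norm_sub_rev, norm_sub_rev b a, add_comm (‖b‖ ^ _)] at this
  have hd : pFlux p a - pFlux p b =
      ‖a‖ ^ (p - 2) • (a - b) + (‖a‖ ^ (p - 2) - ‖b‖ ^ (p - 2)) • b := by
    simp only [pFlux, smul_sub, sub_smul]; abel
  have h1 := Real.rpow_le_rpow (norm_nonneg b) h (by linarith : 0 ≤ p - 2)
  have h2 := rpow_sub_rpow_mul_le (by linarith : 0 ≤ p - 2) (norm_nonneg b) h
  have h3 : ‖a‖ - ‖b‖ ≤ ‖a - b‖ := norm_sub_norm_le a b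
  have ha : 0 ≤ ‖a‖ ^ (p - 2) := by positivity
  have hb : 0 ≤ ‖b‖ ^ (p - 2) := by positivity
  calc ‖pFlux p a - pFlux p b‖
      ≤ ‖a‖ ^ (p - 2) * ‖a - b‖ + (‖a‖ ^ (p - 2) - ‖b‖ ^ (p - 2)) * ‖b‖ := by
        rw [hd]
        refine (norm_add_le _ _).trans ?_
        rw [norm_smul, norm_smul, Real.norm_of_nonneg ha, Real.norm_of_nonneg (by linarith)]
    _ ≤ ‖a‖ ^ (p - 2) * ‖a - b‖ + (p - 2 + 1) * ‖a‖ ^ (p - 2) * ‖a - b‖ := by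
        have : (p - 2 + 1) * ‖a‖ ^ (p - 2) * (‖a‖ - ‖b‖) ≤
          (p - 2 + 1) * ‖a‖ ^ (p - 2) * ‖a - b‖ :=
          mul_le_mul_of_nonneg_left h3 (mul_nonneg (by linarith) ha)
        linarith
    _ = p * (‖a‖ ^ (p - 2)) * ‖a - b‖ := by ring
    _ ≤ _ := by gcongr; linarith

/-- Strong monotonicity of the `p`-Laplace flux, in the form used for Caccioppoli estimates. -/
lemma exists_norm_pFlux_sub_sq_le {p β : ℝ} (hp : 1 < p) (hβ : 0 < β) :
    ∃ C, 0 < C ∧ ∀ a b : E, β ≤ ‖b‖ →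
      0 ≤ ⟪pFlux p a - pFlux p b, a - b⟫ ∧
      ‖pFlux p a - pFlux p b‖ ^ 2 ≤
        C * (‖a‖ ^ |p - 2| + ‖b‖ ^ |p - 2|) * ⟪pFlux p a - pFlux p b, a - b⟫ := by
  rcases le_or_gt 2 p with h2 | h2
  · refine ⟨2 * p ^ 2, by positivity, fun a b _ => ?_⟩
    rw [abs_of_nonneg (by linarith : 0 ≤ p - 2)]
    have hmono := half_add_rpow_mul_norm_sub_sq_le (by linarith : 0 ≤ p - 2) (norm_nonneg a)
      (norm_nonneg b) a b Iff.rfl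
    change _ ≤ ⟪pFlux p a - pFlux p b, a - b⟫ at hmono
    set ω := ‖a‖ ^ (p - 2) + ‖b‖ ^ (p - 2) with hω
    have hω0 : 0 ≤ ω := by positivity
    refine ⟨le_trans (by positivity) hmono, ?_⟩
    calc ‖pFlux p a - pFlux p b‖ ^ 2 ≤ (p * ω * ‖a - b‖) ^ 2 :=
          pow_le_pow_left₀ (norm_nonneg _) (norm_pFlux_sub_le h2 a b) 2
      _ = 2 * p ^ 2 * ω * (ω / 2 * ‖a - b‖ ^ 2) := by ring
      _ ≤ _ := mul_le_mul_of_nonneg_left hmono (by positivity)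
  · have hC : 0 < β ^ (2 - p) := Real.rpow_pos_of_pos hβ _
    refine ⟨2 / (β ^ (2 - p)) ^ 2, by positivity, fun a b hb => ?_⟩
    rw [abs_of_neg (by linarith : p - 2 < 0), neg_sub]
    have hinv : ∀ c : E, ‖c‖ ^ (2 - p) • pFlux p c = c := by
      intro c
      rcases eq_or_ne c 0 with rfl | hc
      · simp [pFlux]
      · rw [pFlux, smul_smul, ← Real.rpow_add (norm_pos_iff.2 hc)]
        simp
    have hst : ‖a‖ ≤ ‖b‖ ↔ ‖pFlux p a‖ ≤ ‖pFlux p b‖ := by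
      rw [norm_pFlux hp, norm_pFlux hp,
        Real.rpow_le_rpow_iff (norm_nonneg a) (norm_nonneg b) (by linarith)]
    have hmono := half_add_rpow_mul_norm_sub_sq_le (by linarith : 0 ≤ 2 - p) (norm_nonneg a)
      (norm_nonneg b) (pFlux p a) (pFlux p b) hst
    rw [hinv, hinv, real_inner_comm] at hmono
    set ω := ‖a‖ ^ (2 - p) + ‖b‖ ^ (2 - p) with hω
    have hωβ : β ^ (2 - p) ≤ ω := by
      have h1 := Real.rpow_le_rpow hβ.le hb (by linarith : 0 ≤ 2 - p)
      have h2 : 0 ≤ ‖a‖ ^ (2 - p) := by positivity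
      linarith
    set X := ⟪pFlux p a - pFlux p b, a - b⟫
    set Y := ‖pFlux p a - pFlux p b‖ ^ 2
    have hY : 0 ≤ Y := by positivity
    have hX : 0 ≤ X := le_trans (by positivity) hmono
    refine ⟨hX, ?_⟩
    rw [div_mul_eq_mul_div, div_mul_eq_mul_div, le_div_iff₀ (by positivity)]
    calc Y * (β ^ (2 - p)) ^ 2 ≤ Y * ω ^ 2 := by gcongr
      _ = 2 * ω * (ω / 2 * Y) := by ring
      _ ≤ 2 * ω * X := mul_le_mul_of_nonneg_left hmono (by positivity)

end Flux

section TestFunctions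

lemma ContinuousOn.integrable_of_compact_support_subset {X : Type*} [TopologicalSpace X]
    [T2Space X] [MeasurableSpace X] [BorelSpace X] {μ : Measure X} [IsFiniteMeasureOnCompacts μ]
    {f : X → ℝ} {Ω K : Set X} (hf : ContinuousOn f Ω) (hK : IsCompact K) (hKΩ : K ⊆ Ω)
    (hfK : ∀ x, x ∉ K → f x = 0) : Integrable f μ := by
  rw [← integrableOn_iff_integrable_of_support_subset (s := K)]
  · exact (hf.mono hKΩ).integrableOn_compact' hK hK.measurableSet
  · intro x hx
    by_contra h
    exact hx (hfK x h)

variable {E : Type*} [NormedAddCommGroup E] [InnerProductSpace ℝ E] [FiniteDimensional ℝ E]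

lemma gradient_eq_zero_of_notMem_tsupport {φ : E → ℝ} {x : E} (hx : x ∉ tsupport φ) :
    gradient φ x = 0 := by
  have h : fderiv ℝ φ x = 0 := by
    by_contra h
    exact hx (support_fderiv_subset ℝ h)
  simp [gradient, h]

lemma ContDiffOn.continuousOn_gradient {φ : E → ℝ} {Ω : Set E} (hΩ : IsOpen Ω)
    (hφ : ContDiffOn ℝ 1 φ Ω) : ContinuousOn (gradient φ) Ω :=
  (InnerProductSpace.toDual ℝ E).symm.continuous.comp_continuousOn
    (hφ.continuousOn_fderiv_of_isOpen hΩ le_rfl)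

variable [MeasurableSpace E] [BorelSpace E]

/-- A `C¹` compactly supported function is approximated in `C¹` by smooth functions with
supports in any prescribed neighbourhood. -/
lemma exists_smooth_dist_gradient_le {φ : E → ℝ} (hφ : ContDiff ℝ 1 φ)
    (hc : HasCompactSupport φ) {δ ε : ℝ} (hδ : 0 < δ) (hε : 0 < ε) :
    ∃ ψ : E → ℝ, ContDiff ℝ (⊤ : ℕ∞) ψ ∧ tsupport ψ ⊆ Metric.cthickening δ (tsupport φ) ∧
      ∀ x, ‖gradient φ x - gradient ψ x‖ ≤ ε := by
  have huc : UniformContinuous (fderiv ℝ φ) :=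
    (hc.fderiv ℝ).uniformContinuous_of_continuous (hφ.continuous_fderiv one_ne_zero)
  obtain ⟨δ', hδ', hδε⟩ := Metric.uniformContinuous_iff.1 huc ε hε
  have hη : 0 < min δ δ' := lt_min hδ hδ'
  let ρ : ContDiffBump (0 : E) := ⟨min δ δ' / 2, min δ δ', half_pos hη, half_lt_self hη⟩
  refine ⟨convolution (ρ.normed volume) φ (ContinuousLinearMap.lsmul ℝ ℝ) volume, ?_, ?_, ?_⟩
  · exact ρ.hasCompactSupport_normed.contDiff_convolution_left _ ρ.contDiff_normed
      hφ.continuous.locallyIntegrable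
  · refine closure_minimal ?_ Metric.isClosed_cthickening
    intro x hx
    obtain ⟨y, hy, z, hz, rfl⟩ := support_convolution_subset _ hx
    rw [ρ.support_normed_eq, Metric.mem_ball, dist_zero_right] at hy
    refine Metric.mem_cthickening_of_dist_le _ z δ _ (subset_tsupport _ hz) ?_
    simpa using hy.le.trans (min_le_left _ _)
  · intro x
    have hd := (hc.hasFDerivAt_convolution_right (μ := volume) (ContinuousLinearMap.lsmul ℝ ℝ)
      (ρ.continuous_normed (μ := volume)).locallyIntegrable hφ x).fderiv
    have hle : dist (convolution (ρ.normed volume) (fderiv ℝ φ)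
        (ContinuousLinearMap.lsmul ℝ ℝ) volume x) (fderiv ℝ φ x) ≤ ε :=
      ρ.dist_normed_convolution_le (hφ.continuous_fderiv one_ne_zero).aestronglyMeasurable
        fun y hy => (hδε ((Metric.mem_ball.1 hy).trans_le (min_le_right _ _))).le
    rw [gradient, gradient, ← map_sub, LinearIsometryEquiv.norm_map, hd, ← dist_eq_norm,
      dist_comm]
    exact hle

/-- A weak divergence-free condition tested on smooth functions extends to `C¹` functions. -/
lemma integral_inner_gradient_eq_zero_of_smooth {F : E → E} {Ω : Set E} (hΩ : IsOpen Ω)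
    (hF : ContinuousOn F Ω)
    (h : ∀ φ : E → ℝ, ContDiff ℝ (⊤ : ℕ∞) φ → HasCompactSupport φ → tsupport φ ⊆ Ω →
      ∫ x in Ω, ⟪F x, gradient φ x⟫ = 0)
    {φ : E → ℝ} (hφ : ContDiff ℝ 1 φ) (hc : HasCompactSupport φ) (hs : tsupport φ ⊆ Ω) :
    ∫ x in Ω, ⟪F x, gradient φ x⟫ = 0 := by
  obtain ⟨δ, hδ, hδΩ⟩ := hc.isCompact.exists_cthickening_subset_open hΩ hs
  set K := Metric.cthickening δ (tsupport φ) with hK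
  have hKc : IsCompact K := hc.isCompact.cthickening
  have hφK : tsupport φ ⊆ K := Metric.self_subset_cthickening _
  have restr : ∀ ψ : E → ℝ, tsupport ψ ⊆ K →
      ∫ x in Ω, ⟪F x, gradient ψ x⟫ = ∫ x in K, ⟪F x, gradient ψ x⟫ := by
    intro ψ hψ
    refine setIntegral_eq_of_subset_of_forall_sdiff_eq_zero hΩ.measurableSet hδΩ ?_
    intro x hx
    rw [gradient_eq_zero_of_notMem_tsupport fun hx' => hx.2 (hψ hx'), inner_zero_right]
  have hint : ∀ ψ : E → ℝ, ContDiff ℝ 1 ψ →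
      IntegrableOn (fun x => ⟪F x, gradient ψ x⟫) K volume := fun ψ hψ =>
    ((hF.mono hδΩ).inner (𝕜 := ℝ)
      ((hψ.contDiffOn.continuousOn_gradient isOpen_univ).mono (Set.subset_univ _))).integrableOn_compact
        hKc
  have hFi : IntegrableOn (fun x => ‖F x‖) K volume := (hF.mono hδΩ).norm.integrableOn_compact hKc
  set I := ∫ x in K, ‖F x‖ with hI
  have hI0 : 0 ≤ I := integral_nonneg fun x => norm_nonneg _
  have key : ∀ ε > 0, ‖∫ x in Ω, ⟪F x, gradient φ x⟫‖ ≤ ε * I := by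
    intro ε hε
    obtain ⟨ψ, hψ, hψs, hψε⟩ := exists_smooth_dist_gradient_le hφ hc hδ hε
    have h0 := h ψ hψ (hKc.of_isClosed_subset (isClosed_tsupport _) hψs) (hψs.trans hδΩ)
    have hψ1 : ContDiff ℝ 1 ψ := hψ.of_le (by exact_mod_cast le_top)
    rw [← sub_zero (∫ x in Ω, _), ← h0, restr φ hφK, restr ψ hψs,
      ← integral_sub (hint φ hφ) (hint ψ hψ1), ← integral_const_mul]
    refine norm_integral_le_of_norm_le (hFi.const_mul ε) (ae_of_all _ fun x => ?_)
    rw [← inner_sub_right, mul_comm]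
    exact (norm_inner_le_norm _ _).trans
      (mul_le_mul_of_nonneg_left (hψε x) (norm_nonneg _))
  rw [← norm_eq_zero]
  by_contra hne
  have hpos := lt_of_le_of_ne (norm_nonneg _) (Ne.symm hne)
  set X := ‖∫ x in Ω, ⟪F x, gradient φ x⟫‖
  have := key (X / (2 * (I + 1))) (by positivity)
  rw [div_mul_eq_mul_div, le_div_iff₀ (by positivity)] at this
  nlinarith

end TestFunctions

section Divergence
variable {n : ℕ}

lemma integral_sum_mul_fderiv_eq_zero_of_div_eq_zero {Ω : Set (EuclideanSpace ℝ (Fin n))}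
    (hΩ : IsOpen Ω) {f : Fin n → EuclideanSpace ℝ (Fin n) → ℝ}
    (hf : ∀ i, ContDiffOn ℝ 1 (f i) Ω)
    (hdiv : ∀ x ∈ Ω, ∑ i, fderiv ℝ (f i) x (EuclideanSpace.single i 1) = 0)
    {φ : EuclideanSpace ℝ (Fin n) → ℝ} (hφ : ContDiff ℝ 1 φ) (hc : HasCompactSupport φ)
    (hs : tsupport φ ⊆ Ω) :
    ∫ x, ∑ i, f i x * fderiv ℝ φ x (EuclideanSpace.single i 1) = 0 := by
  have hφ0 : ∀ x, x ∉ tsupport φ → φ x = 0 := fun x hx => image_eq_zero_of_notMem_tsupport hx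
  have hφ'0 : ∀ x, x ∉ tsupport φ → fderiv ℝ φ x = 0 := fun x hx => by
    by_contra h
    exact hx (support_fderiv_subset ℝ h)
  have hφ'c : Continuous (fderiv ℝ φ) := hφ.continuous_fderiv one_ne_zero
  have hi1 : ∀ i, Integrable fun x => f i x * fderiv ℝ φ x (EuclideanSpace.single i 1) := fun i =>
    ContinuousOn.integrable_of_compact_support_subset
      ((hf i).continuousOn.mul (hφ'c.clm_apply continuous_const).continuousOn)
      hc.isCompact hs fun x hx => by simp [hφ'0 x hx]
  have hi2 : ∀ i, Integrable fun x => fderiv ℝ (f i) x (EuclideanSpace.single i 1) * φ x :=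
    fun i => ContinuousOn.integrable_of_compact_support_subset
      ((((hf i).continuousOn_fderiv_of_isOpen hΩ le_rfl).clm_apply continuousOn_const).mul
        hφ.continuous.continuousOn) hc.isCompact hs fun x hx => by simp [hφ0 x hx]
  have hi3 : ∀ i, Integrable fun x => f i x * φ x := fun i =>
    ContinuousOn.integrable_of_compact_support_subset
      ((hf i).continuousOn.mul hφ.continuous.continuousOn) hc.isCompact hs
      fun x hx => by simp [hφ0 x hx]
  rw [integral_finsetSum _ fun i _ => hi1 i]
  have hibp : ∀ i, ∫ x, f i x * fderiv ℝ φ x (EuclideanSpace.single i 1) =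
      -∫ x, fderiv ℝ (f i) x (EuclideanSpace.single i 1) * φ x := fun i =>
    integral_mul_fderiv_eq_neg_fderiv_mul_of_integrable (hi2 i) (hi1 i) (hi3 i)
      (fun x hx => ((hf i).differentiableOn one_ne_zero).differentiableAt (hΩ.mem_nhds (hs hx)))
      fun x _ => hφ.differentiable one_ne_zero x
  simp_rw [hibp]
  rw [Finset.sum_neg_distrib, ← integral_finsetSum _ fun i _ => hi2 i, neg_eq_zero]
  refine integral_eq_zero_of_ae (ae_of_all _ fun x => ?_)
  simp only [← Finset.sum_mul, Pi.zero_apply]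
  by_cases hx : x ∈ tsupport φ
  · rw [hdiv x (hs hx), zero_mul]
  · rw [hφ0 x hx, mul_zero]

end Divergence

section Comparison
variable {n k : ℕ}

/-- The projection of `x` onto its first `k` coordinates. -/
noncomputable def headProj (n k : ℕ) (x : EuclideanSpace ℝ (Fin n)) : EuclideanSpace ℝ (Fin n) :=
  WithLp.toLp 2 fun i => if (i : ℕ) < k then x i else 0

lemma headProj_apply (x : EuclideanSpace ℝ (Fin n)) (i : Fin n) :
    headProj n k x i = if (i : ℕ) < k then x i else 0 := rfl

lemma dk_nonneg (x : EuclideanSpace ℝ (Fin n)) : 0 ≤ dk n k x := Real.sqrt_nonneg _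

lemma dk_sq (x : EuclideanSpace ℝ (Fin n)) :
    dk n k x ^ 2 = ∑ i ∈ Finset.univ.filter (fun i : Fin n => (i : ℕ) < k), x i ^ 2 :=
  Real.sq_sqrt (Finset.sum_nonneg fun _ _ => sq_nonneg _)

lemma norm_headProj (x : EuclideanSpace ℝ (Fin n)) : ‖headProj n k x‖ = dk n k x := by
  rw [EuclideanSpace.norm_eq, dk, Finset.sum_filter]
  congr 1
  refine Finset.sum_congr rfl fun i _ => ?_
  rw [headProj_apply]
  split_ifs <;> simp

lemma dk_add_smul_headProj (x : EuclideanSpace ℝ (Fin n)) {c : ℝ} (hc : 0 ≤ 1 + c) :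
    dk n k (x + c • headProj n k x) = (1 + c) * dk n k x := by
  rw [← sq_eq_sq₀ (dk_nonneg _) (mul_nonneg hc (dk_nonneg _)), mul_pow, dk_sq, dk_sq,
    Finset.mul_sum]
  refine Finset.sum_congr rfl fun i hi => ?_
  have hi' : (i : ℕ) < k := (Finset.mem_filter.1 hi).2
  simp only [PiLp.add_apply, PiLp.smul_apply, headProj_apply, hi', if_true, smul_eq_mul]
  ring

lemma continuous_dk : Continuous (dk n k) := by
  unfold dk
  fun_prop

lemma isOpen_DInf (r : ℝ) : IsOpen (DInf n k r) := isOpen_lt continuous_const continuous_dk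

lemma hasFDerivAt_dk_sq (x : EuclideanSpace ℝ (Fin n)) :
    HasFDerivAt (fun y => dk n k y ^ 2)
      ((2 : ℝ) • InnerProductSpace.toDual ℝ _ (headProj n k x)) x := by
  simp_rw [dk_sq]
  have h : HasFDerivAt (fun y : EuclideanSpace ℝ (Fin n) =>
      ∑ i ∈ Finset.univ.filter (fun i : Fin n => (i : ℕ) < k), y i ^ 2)
      (∑ i ∈ Finset.univ.filter (fun i : Fin n => (i : ℕ) < k),
        ((2 : ℕ) * x i ^ (2 - 1)) • EuclideanSpace.proj (𝕜 := ℝ) i) x :=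
    HasFDerivAt.fun_sum fun i _ => by
      simpa using ((EuclideanSpace.proj (𝕜 := ℝ) i).hasFDerivAt (x := x)).pow 2
  refine h.congr_fderiv ?_
  ext y
  simp only [sum_apply, smul_apply, smul_eq_mul,
    InnerProductSpace.toDual_apply_apply, PiLp.inner_apply, headProj_apply, Finset.mul_sum,
    Finset.sum_filter]
  refine Finset.sum_congr rfl fun i _ => ?_
  split_ifs 
  · simp; ring
  · simp

lemma hasGradientAt_dk {x : EuclideanSpace ℝ (Fin n)} (hx : 0 < dk n k x) :
    HasGradientAt (dk n k) ((dk n k x)⁻¹ • headProj n k x) x := by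
  rw [hasGradientAt_iff_hasFDerivAt]
  have h := (hasFDerivAt_dk_sq (k := k) x).sqrt (by positivity)
  simp only [Real.sqrt_sq (dk_nonneg _)] at h
  refine h.congr_fderiv ?_
  rw [map_smul, smul_smul]
  congr 1
  field_simp

lemma contDiffOn_dk : ContDiffOn ℝ 1 (dk n k) {x | 0 < dk n k x} := by
  intro x hx
  refine ContDiffAt.contDiffWithinAt (ContDiffAt.sqrt ?_ ?_)
  · fun_prop
  · rw [← dk_sq]
    exact (pow_pos hx 2).ne'

variable {p r R : ℝ}

lemma continuousOn_rpow_Ioi (e : ℝ) : ContinuousOn (fun s : ℝ => s ^ e) (Set.Ioi 0) :=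
  fun _ hs => (Real.continuousAt_rpow_const _ _ (Or.inl (ne_of_gt hs))).continuousWithinAt

lemma intervalIntegrable_rpow_of_pos {a b : ℝ} (ha : 0 < a) (hb : 0 < b) (e : ℝ) :
    IntervalIntegrable (fun s : ℝ => s ^ e) volume a b :=
  ((continuousOn_rpow_Ioi e).mono fun _ hs =>
    (lt_min ha hb).trans_le hs.1).intervalIntegrable

lemma integral_rpow_pos_of_lt {a b : ℝ} (ha : 0 < a) (hab : a < b) (e : ℝ) :
    0 < ∫ s in a..b, s ^ e :=
  intervalIntegral.intervalIntegral_pos_of_pos_on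
    (intervalIntegrable_rpow_of_pos ha (ha.trans hab) e)
    (fun _ hs => Real.rpow_pos_of_pos (ha.trans hs.1) _) hab

lemma hasDerivAt_u0 (hr : 0 < r) {t : ℝ} (ht : 0 < t) :
    HasDerivAt (u0 k p r R) (t ^ ((1 - (k : ℝ)) / (p - 1)) /
      ∫ s in r..R, s ^ ((1 - (k : ℝ)) / (p - 1))) t := by
  refine HasDerivAt.div_const ?_ _
  exact intervalIntegral.integral_hasDerivAt_right (intervalIntegrable_rpow_of_pos hr ht _)
    ((continuousOn_rpow_Ioi _).stronglyMeasurableAtFilter isOpen_Ioi _ ht)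
    ((continuousOn_rpow_Ioi _).continuousAt (Ioi_mem_nhds ht))

lemma contDiffOn_u0 (hr : 0 < r) : ContDiffOn ℝ 1 (u0 k p r R) (Set.Ioi 0) := by
  rw [← zero_add (1 : WithTop ℕ∞), contDiffOn_succ_iff_deriv_of_isOpen isOpen_Ioi]
  refine ⟨fun t ht => (hasDerivAt_u0 hr ht).differentiableAt.differentiableWithinAt,
    by simp, contDiffOn_zero.2 ?_⟩
  exact ((continuousOn_rpow_Ioi _).div_const _).congr fun t ht => (hasDerivAt_u0 hr ht).deriv

lemma u0_nonneg (hr : 0 < r) (hrR : r < R) {t : ℝ} (ht : r ≤ t) : 0 ≤ u0 k p r R t :=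
  div_nonneg (intervalIntegral.integral_nonneg ht fun _ hs =>
    Real.rpow_nonneg (hr.le.trans hs.1) _) (integral_rpow_pos_of_lt hr hrR _).le

lemma u0_self (hr : 0 < r) (hrR : r < R) : u0 k p r R R = 1 :=
  div_self (integral_rpow_pos_of_lt hr hrR _).ne'

lemma DInf_subset (hr : 0 < r) : DInf n k r ⊆ {x | 0 < dk n k x} := fun _ hx => hr.trans hx

lemma contDiffOn_uComp (hr : 0 < r) : ContDiffOn ℝ 1 (uComp n k p r R) (DInf n k r) :=
  (contDiffOn_u0 hr).comp (contDiffOn_dk.mono (DInf_subset hr)) (DInf_subset hr)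

lemma gradient_uComp (hr : 0 < r) {x : EuclideanSpace ℝ (Fin n)} (hx : 0 < dk n k x) :
    gradient (uComp n k p r R) x = (dk n k x ^ ((1 - (k : ℝ)) / (p - 1)) /
      ∫ s in r..R, s ^ ((1 - (k : ℝ)) / (p - 1))) • (dk n k x)⁻¹ • headProj n k x := by
  refine HasGradientAt.gradient ?_
  rw [hasGradientAt_iff_hasFDerivAt, map_smul]
  exact (hasDerivAt_u0 hr hx).comp_hasFDerivAt x (hasGradientAt_dk hx).hasFDerivAt

lemma norm_inv_smul_headProj {x : EuclideanSpace ℝ (Fin n)} (hx : 0 < dk n k x) :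
    ‖(dk n k x)⁻¹ • headProj n k x‖ = 1 := by
  rw [norm_smul, norm_headProj, Real.norm_of_nonneg (by positivity), inv_mul_cancel₀ hx.ne']

lemma norm_gradient_uComp (hr : 0 < r) (hrR : r < R) {x : EuclideanSpace ℝ (Fin n)}
    (hx : 0 < dk n k x) :
    ‖gradient (uComp n k p r R) x‖ = dk n k x ^ ((1 - (k : ℝ)) / (p - 1)) /
      ∫ s in r..R, s ^ ((1 - (k : ℝ)) / (p - 1)) := by
  have hξ := integral_rpow_pos_of_lt hr hrR ((1 - (k : ℝ)) / (p - 1))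
  rw [gradient_uComp hr hx, norm_smul, norm_inv_smul_headProj hx, mul_one,
    Real.norm_of_nonneg (by positivity)]

lemma exists_le_norm_gradient_uComp (hk : 1 ≤ k) (hp : 1 < p) (hr : 0 < r) (hrR : r < R) :
    ∃ β, 0 < β ∧ ∀ x : EuclideanSpace ℝ (Fin n), 0 < dk n k x → dk n k x ≤ R →
      β ≤ ‖gradient (uComp n k p r R) x‖ := by
  have hξ := integral_rpow_pos_of_lt hr hrR ((1 - (k : ℝ)) / (p - 1))
  refine ⟨R ^ ((1 - (k : ℝ)) / (p - 1)) / ∫ s in r..R, s ^ ((1 - (k : ℝ)) / (p - 1)),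
    div_pos (Real.rpow_pos_of_pos (hr.trans hrR) _) hξ, fun x hx hxR => ?_⟩
  rw [norm_gradient_uComp hr hrR hx]
  have hk' : (1 : ℝ) ≤ k := by exact_mod_cast hk
  exact div_le_div_of_nonneg_right (Real.rpow_le_rpow_of_nonpos hx hxR
    (div_nonpos_of_nonpos_of_nonneg (by linarith) (by linarith))) hξ.le

lemma pFlux_gradient_uComp (hp : 1 < p) (hr : 0 < r) (hrR : r < R)
    {x : EuclideanSpace ℝ (Fin n)} (hx : 0 < dk n k x) :
    pFlux p (gradient (uComp n k p r R) x) =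
      ((∫ s in r..R, s ^ ((1 - (k : ℝ)) / (p - 1))) ^ (p - 1))⁻¹ •
        (dk n k x ^ 2) ^ (-(k : ℝ) / 2) • headProj n k x := by
  have hξ := integral_rpow_pos_of_lt hr hrR ((1 - (k : ℝ)) / (p - 1))
  set ξ := ∫ s in r..R, s ^ ((1 - (k : ℝ)) / (p - 1))
  have hunit : pFlux p ((dk n k x)⁻¹ • headProj n k x) = (dk n k x)⁻¹ • headProj n k x := by
    rw [pFlux, norm_inv_smul_headProj hx, Real.one_rpow, one_smul]
  rw [gradient_uComp hr hx, pFlux_smul (div_pos (Real.rpow_pos_of_pos hx _) hξ), hunit,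
    Real.div_rpow (Real.rpow_nonneg hx.le _) hξ.le, ← Real.rpow_mul hx.le,
    div_mul_cancel₀ _ (by linarith : p - 1 ≠ 0), smul_smul, smul_smul, ← Real.rpow_natCast,
    ← Real.rpow_mul hx.le, Real.rpow_sub hx, Real.rpow_one,
    show ((2 : ℕ) : ℝ) * (-(k : ℝ) / 2) = -k by push_cast; ring, Real.rpow_neg hx.le]
  congr 1
  field_simp

lemma sum_fderiv_radial_eq_zero (hkn : k ≤ n) {x : EuclideanSpace ℝ (Fin n)}
    (hx : 0 < dk n k x) :
    ∑ i, fderiv ℝ (fun y => (dk n k y ^ 2) ^ (-(k : ℝ) / 2) * headProj n k y i) x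
      (EuclideanSpace.single i 1) = 0 := by
  have hpow : HasFDerivAt (fun y => (dk n k y ^ 2) ^ (-(k : ℝ) / 2)) _ x :=
    (hasFDerivAt_dk_sq x).rpow_const (Or.inl (pow_pos hx 2).ne')
  have hterm : ∀ i : Fin n,
      fderiv ℝ (fun y => (dk n k y ^ 2) ^ (-(k : ℝ) / 2) * headProj n k y i) x
        (EuclideanSpace.single i 1) = if (i : ℕ) < k then
          (dk n k x ^ 2) ^ (-(k : ℝ) / 2) -
            k * (dk n k x ^ 2) ^ (-(k : ℝ) / 2 - 1) * x i ^ 2 else 0 := by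
    intro i
    simp only [headProj_apply]
    split_ifs with hi
    · have hmul : HasFDerivAt (fun y => (dk n k y ^ 2) ^ (-(k : ℝ) / 2) * y i) _ x :=
        hpow.mul (EuclideanSpace.proj (𝕜 := ℝ) i).hasFDerivAt
      rw [hmul.fderiv]
      simp [EuclideanSpace.inner_single_right, headProj_apply, hi]
      ring
    · simp
  simp_rw [hterm]
  rw [← Finset.sum_filter, Finset.sum_sub_distrib, ← Finset.mul_sum, ← dk_sq,
    Real.rpow_sub_one (pow_pos hx 2).ne', Finset.sum_const]
  have hcard : (Finset.univ.filter fun i : Fin n => (i : ℕ) < k).card = k := by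
    rw [Fin.card_filter_val_lt, min_eq_right hkn]
  rw [hcard, nsmul_eq_mul]
  field_simp
  ring

/-- The comparison function `u` is `p`-harmonic, tested on `C¹` functions. -/
lemma integral_inner_pFlux_gradient_uComp (hkn : k ≤ n) (hp : 1 < p) (hr : 0 < r) (hrR : r < R)
    {φ : EuclideanSpace ℝ (Fin n) → ℝ} (hφ : ContDiff ℝ 1 φ) (hc : HasCompactSupport φ)
    (hs : tsupport φ ⊆ DInf n k r) :
    ∫ x in DInf n k r, ⟪pFlux p (gradient (uComp n k p r R) x), gradient φ x⟫ = 0 := by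
  have hsmooth : ∀ i, ContDiffOn ℝ 1
      (fun y => (dk n k y ^ 2) ^ (-(k : ℝ) / 2) * headProj n k y i) (DInf n k r) := by
    intro i
    refine ContDiffOn.mul ?_ ?_
    · exact ((contDiffOn_dk.mono (DInf_subset hr)).pow 2).rpow_const_of_ne fun x hx =>
        (pow_pos (DInf_subset hr hx) 2).ne'
    · simp only [headProj_apply]
      split_ifs <;> fun_prop
  have h0 := integral_sum_mul_fderiv_eq_zero_of_div_eq_zero (isOpen_DInf r) hsmooth
    (fun x hx => sum_fderiv_radial_eq_zero hkn (DInf_subset hr hx)) hφ hc hs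
  rw [← setIntegral_eq_integral_of_forall_compl_eq_zero (s := DInf n k r)] at h0
  · rw [← mul_zero ((∫ s in r..R, s ^ ((1 - (k : ℝ)) / (p - 1))) ^ (p - 1))⁻¹, ← h0,
      ← integral_const_mul]
    refine setIntegral_congr_fun (isOpen_DInf r).measurableSet fun x hx => ?_
    simp only
    rw [pFlux_gradient_uComp hp hr hrR (DInf_subset hr hx), real_inner_smul_left,
      real_inner_smul_left, PiLp.inner_apply, Finset.mul_sum]
    congr 1
    refine Finset.sum_congr rfl fun i _ => ?_
    rw [← inner_gradient_left, EuclideanSpace.inner_single_right]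
    simp
    ring
  · intro x hx
    have : fderiv ℝ φ x = 0 := by
      by_contra h
      exact hx (hs (support_fderiv_subset ℝ h))
    simp [this]

end Comparison

section Caccioppoli

/-- The `C¹` nondecreasing truncation `s ↦ ∫₀ˢ min (max τ 0) 1 dτ`. -/
noncomputable def softPos (s : ℝ) : ℝ := ∫ τ in (0 : ℝ)..s, min (max τ 0) 1

lemma hasDerivAt_softPos (s : ℝ) : HasDerivAt softPos (min (max s 0) 1) s := by
  have hcont : Continuous fun τ : ℝ => min (max τ 0) 1 := by fun_prop
  exact intervalIntegral.integral_hasDerivAt_right (hcont.intervalIntegrable _ _)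
    (hcont.stronglyMeasurableAtFilter _ _) hcont.continuousAt

lemma contDiff_softPos : ContDiff ℝ 1 softPos := by
  rw [contDiff_one_iff_deriv]
  refine ⟨fun s => (hasDerivAt_softPos s).differentiableAt, ?_⟩
  rw [funext fun s => (hasDerivAt_softPos s).deriv]
  fun_prop

lemma softPos_of_nonpos {s : ℝ} (hs : s ≤ 0) : softPos s = 0 := by
  rw [softPos, intervalIntegral.integral_symm, neg_eq_zero]
  refine intervalIntegral.integral_zero_ae (ae_of_all _ fun τ hτ => ?_)
  rw [Set.uIoc_of_le hs] at hτ
  simp [hτ.2]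

lemma softPos_pos {s : ℝ} (hs : 0 < s) : 0 < softPos s :=
  intervalIntegral.intervalIntegral_pos_of_pos_on
    (Continuous.intervalIntegrable (by fun_prop) _ _)
    (fun τ hτ => by simp [hτ.1]) hs

lemma softPos_nonneg (s : ℝ) : 0 ≤ softPos s := by
  rcases le_or_gt s 0 with hs | hs
  · rw [softPos_of_nonpos hs]
  · exact (softPos_pos hs).le

lemma softPos_sq_le (s : ℝ) : softPos s ^ 2 ≤ min (max s 0) 1 * (max s 0) ^ 2 := by
  rcases le_or_gt s 0 with hs | hs
  · simp [softPos_of_nonpos hs, hs]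
  have hmono : softPos s ≤ min (max s 0) 1 * s := by
    have h : softPos s ≤ ∫ _ in (0 : ℝ)..s, min (max s 0) 1 :=
      intervalIntegral.integral_mono_on hs.le
        (Continuous.intervalIntegrable (by fun_prop) _ _)
        (Continuous.intervalIntegrable (by fun_prop) _ _)
        fun τ hτ => min_le_min_right _ (max_le_max_right _ hτ.2)
    simpa [mul_comm] using h
  rw [max_eq_left hs.le] at *
  have h0 : 0 ≤ min s 1 := le_min hs.le zero_le_one
  have h1 : min s 1 ≤ 1 := min_le_right _ _
  calc softPos s ^ 2 ≤ (min s 1 * s) ^ 2 := pow_le_pow_left₀ (softPos_nonneg s) hmono 2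
    _ = min s 1 * (min s 1 * s ^ 2) := by ring
    _ ≤ min s 1 * (1 * s ^ 2) := by gcongr
    _ = min s 1 * s ^ 2 := by ring

variable {E : Type*} [NormedAddCommGroup E] [InnerProductSpace ℝ E] [FiniteDimensional ℝ E]

lemma exists_cutoff (E : Type*) [NormedAddCommGroup E] [InnerProductSpace ℝ E]
    [FiniteDimensional ℝ E] :
    ∃ L : ℝ, ∀ N : ℝ, 0 < N → ∃ θ : E → ℝ, ContDiff ℝ 1 θ ∧ HasCompactSupport θ ∧
      (∀ x, ‖x‖ ≤ N → θ x = 1) ∧ ∀ x, ‖gradient θ x‖ ≤ L / N := by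
  let η : ContDiffBump (0 : E) := ⟨1, 2, one_pos, one_lt_two⟩
  have hη : ContDiff ℝ 1 η := η.contDiff
  obtain ⟨L, hL⟩ := (η.hasCompactSupport.fderiv ℝ).exists_bound_of_continuous
    (hη.continuous_fderiv one_ne_zero)
  refine ⟨L, fun N hN => ⟨fun x => η (N⁻¹ • x), hη.comp (contDiff_const_smul _),
    η.hasCompactSupport.comp_smul (inv_ne_zero hN.ne'), fun x hx => ?_, fun x => ?_⟩⟩
  · refine η.one_of_mem_closedBall ?_
    rw [mem_closedBall_zero_iff, norm_smul, norm_inv, Real.norm_of_nonneg hN.le,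
      inv_mul_le_iff₀ hN]
    simpa [η] using hx
  · rw [gradient, LinearIsometryEquiv.norm_map, fderiv_comp_smul, norm_smul, norm_inv,
      Real.norm_of_nonneg hN.le, div_eq_inv_mul]
    exact mul_le_mul_of_nonneg_left (hL _) (inv_nonneg.2 hN.le)

variable [MeasurableSpace E] [BorelSpace E]

/-- Caccioppoli-type comparison: a function that vanishes near the boundary of `D` where two
`p`-harmonic functions differ by more than `ε` forces their gradients to agree there. -/
lemma gradient_eq_of_weighted_integrable {D : Set E} (hD : IsOpen D) {V u : E → ℝ}
    (hV : ContDiffOn ℝ 1 V D) (hu : ContDiffOn ℝ 1 u D) {p β ε : ℝ} (hp : 1 < p) (hβ : 0 < β)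
    (hε : 0 ≤ ε) (hub : ∀ x ∈ D, β ≤ ‖gradient u x‖)
    (hweak : ∀ φ : E → ℝ, ContDiff ℝ 1 φ → HasCompactSupport φ → tsupport φ ⊆ D →
      ∫ x in D, ⟪pFlux p (gradient V x) - pFlux p (gradient u x), gradient φ x⟫ = 0)
    (hsupp : tsupport (D.indicator fun x => softPos (V x - u x - ε)) ⊆ D)
    (hint : IntegrableOn (fun x => |V x - u x| ^ 2 *
      (‖gradient V x‖ ^ |p - 2| + ‖gradient u x‖ ^ |p - 2|)) D)
    {x : E} (hx : x ∈ D) (hxε : ε < V x - u x) : gradient V x = gradient u x := by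
  set G : E → ℝ := D.indicator fun x => softPos (V x - u x - ε) with hGdef
  set F : E → E := fun x => pFlux p (gradient V x) - pFlux p (gradient u x) with hFdef
  set h : E → ℝ := fun x => min (max (V x - u x - ε) 0) 1 with hhdef
  set H : E → ℝ := fun x => h x * ⟪F x, gradient V x - gradient u x⟫ with hHdef
  set J : E → ℝ := fun x => |V x - u x| ^ 2 *
      (‖gradient V x‖ ^ |p - 2| + ‖gradient u x‖ ^ |p - 2|) with hJdef
  obtain ⟨C, hC, hCF⟩ := exists_norm_pFlux_sub_sq_le (E := E) hp hβ
  obtain ⟨L, hL⟩ := exists_cutoff E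
  have hGD : ∀ y ∈ D, G y = softPos (V y - u y - ε) := fun y hy => Set.indicator_of_mem hy _
  have hGev : ∀ y ∈ D, G =ᶠ[nhds y] fun z => softPos (V z - u z - ε) := fun y hy => by
    filter_upwards [hD.mem_nhds hy] with z hz using hGD z hz
  have hVd : ∀ y ∈ D, DifferentiableAt ℝ V y := fun y hy =>
    (hV.differentiableOn one_ne_zero).differentiableAt (hD.mem_nhds hy)
  have hud : ∀ y ∈ D, DifferentiableAt ℝ u y := fun y hy =>
    (hu.differentiableOn one_ne_zero).differentiableAt (hD.mem_nhds hy)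
  have hG : ContDiff ℝ 1 G := by
    rw [contDiff_iff_contDiffAt]
    intro y
    by_cases hy : y ∈ tsupport G
    · have hyD := hsupp hy
      refine ContDiffAt.congr_of_eventuallyEq ?_ (hGev y hyD)
      exact contDiff_softPos.contDiffAt.comp y
        (((hV.contDiffAt (hD.mem_nhds hyD)).sub (hu.contDiffAt (hD.mem_nhds hyD))).sub
          contDiffAt_const)
    · exact contDiffAt_const.congr_of_eventuallyEq (notMem_tsupport_iff_eventuallyEq.1 hy)
  have hGgrad : ∀ y ∈ D, gradient G y = h y • (gradient V y - gradient u y) := by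
    intro y hy
    refine HasGradientAt.gradient ?_
    rw [hasGradientAt_iff_hasFDerivAt, map_smul, map_sub]
    refine HasFDerivAt.congr_of_eventuallyEq ?_ (hGev y hy)
    exact (hasDerivAt_softPos _).comp_hasFDerivAt y
      (((hVd y hy).hasGradientAt.hasFDerivAt.sub (hud y hy).hasGradientAt.hasFDerivAt).sub_const ε)
  have hFc : ContinuousOn F D :=
    ((continuous_pFlux hp).comp_continuousOn (hV.continuousOn_gradient hD)).sub
      ((continuous_pFlux hp).comp_continuousOn (hu.continuousOn_gradient hD))
  have hHc : ContinuousOn H D := by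
    refine ContinuousOn.mul ?_ (hFc.inner
      ((hV.continuousOn_gradient hD).sub (hu.continuousOn_gradient hD)))
    exact (show Continuous fun s : ℝ => min (max s 0) 1 by fun_prop).comp_continuousOn
      ((hV.continuousOn.sub hu.continuousOn).sub continuousOn_const)
  have hh0 : ∀ y, 0 ≤ h y := fun y => le_min (le_max_right _ _) zero_le_one
  have hH0 : ∀ y ∈ D, 0 ≤ H y := fun y hy => mul_nonneg (hh0 y) (hCF _ _ (hub y hy)).1
  have hHG : ∀ y ∈ D, H y = ⟪F y, gradient G y⟫ := fun y hy => by
    rw [hGgrad y hy, real_inner_smul_right]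
  have energy : ∀ N : ℝ, 0 < N → ∃ θ : E → ℝ, (∀ y, ‖y‖ ≤ N → θ y = 1) ∧
      IntegrableOn (fun y => θ y ^ 2 * H y) D ∧
      ∫ y in D, θ y ^ 2 * H y ≤ 4 * C * (L / N) ^ 2 * ∫ y in D, J y := by
    intro N hN
    obtain ⟨θ, hθ, hθc, hθ1, hθL⟩ := hL N hN
    have hφ : ContDiff ℝ 1 fun y => θ y ^ 2 * G y := (hθ.pow 2).mul hG
    have hφc : HasCompactSupport fun y => θ y ^ 2 * G y :=
      HasCompactSupport.intro hθc.isCompact fun y hy => by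
        simp [image_eq_zero_of_notMem_tsupport hy]
    have hφs : tsupport (fun y => θ y ^ 2 * G y) ⊆ D :=
      (closure_mono (Function.support_mul_subset_right _ _)).trans hsupp
    have hφgrad : ∀ y, gradient (fun y => θ y ^ 2 * G y) y =
        θ y ^ 2 • gradient G y + (2 * G y * θ y) • gradient θ y := by
      intro y
      refine HasGradientAt.gradient ?_
      rw [hasGradientAt_iff_hasFDerivAt]
      have hGy := (hG.differentiable one_ne_zero y).hasGradientAt.hasFDerivAt
      have hθy := (hθ.differentiable one_ne_zero y).hasGradientAt.hasFDerivAt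
      refine ((hθy.pow 2).mul hGy).congr_fderiv ?_
      simp only [map_add, map_smul, smul_smul]
      congr 2
      simp
      ring
    have hTi : IntegrableOn (fun y => θ y ^ 2 * H y) D := by
      have hi : Integrable (fun y => θ y ^ 2 * ⟪F y, gradient G y⟫) volume := by
        refine ContinuousOn.integrable_of_compact_support_subset (Ω := D)
          (K := tsupport θ ∩ tsupport G) ?_ (hθc.isCompact.inter_right (isClosed_tsupport _))
          (Set.inter_subset_right.trans hsupp) ?_
        · exact (hθ.continuous.pow 2).continuousOn.mul (hFc.inner
            ((hG.contDiffOn.continuousOn_gradient isOpen_univ).mono (Set.subset_univ _)))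
        · intro y hy
          by_cases h1 : y ∈ tsupport θ
          · rw [gradient_eq_zero_of_notMem_tsupport fun h2 => hy ⟨h1, h2⟩]
            simp
          · simp [image_eq_zero_of_notMem_tsupport h1]
      exact hi.integrableOn.congr_fun (fun y hy => by simp only [hHG y hy]) hD.measurableSet
    refine ⟨θ, hθ1, hTi, ?_⟩
    have hφi : IntegrableOn (fun y => ⟪F y, gradient (fun y => θ y ^ 2 * G y) y⟫) D :=
      (ContinuousOn.integrable_of_compact_support_subset (Ω := D)
        (hFc.inner ((hφ.contDiffOn.continuousOn_gradient isOpen_univ).mono (Set.subset_univ _)))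
        hφc.isCompact hφs fun y hy => by
          rw [gradient_eq_zero_of_notMem_tsupport hy, inner_zero_right]).integrableOn
    have hpt : ∀ y ∈ D, θ y ^ 2 * H y ≤ 4 * C * (L / N) ^ 2 * J y +
        2 * ⟪F y, gradient (fun y => θ y ^ 2 * G y) y⟫ := by
      intro y hy
      rw [hφgrad y, inner_add_right, real_inner_smul_right, real_inner_smul_right, ← hHG y hy]
      set X := ⟪F y, gradient V y - gradient u y⟫ with hX
      set ω := ‖gradient V y‖ ^ |p - 2| + ‖gradient u y‖ ^ |p - 2| with hω
      have hω0 : 0 ≤ ω := by positivity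
      obtain ⟨hX0, hFX⟩ := hCF (gradient V y) (gradient u y) (hub y hy)
      change ‖F y‖ ^ 2 ≤ C * ω * X at hFX
      have hgsq : G y ^ 2 ≤ h y * |V y - u y| ^ 2 := by
        rw [hGD y hy]
        refine (softPos_sq_le _).trans (mul_le_mul_of_nonneg_left ?_ (hh0 y))
        refine pow_le_pow_left₀ (le_max_right _ _) (max_le ?_ (abs_nonneg _)) 2
        exact (sub_le_self _ hε).trans (le_abs_self _)
      have hLN : 0 ≤ L / N := (norm_nonneg _).trans (hθL y)
      have hI : ⟪F y, gradient θ y⟫ ^ 2 ≤ C * ω * X * (L / N) ^ 2 := by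
        calc ⟪F y, gradient θ y⟫ ^ 2 ≤ (‖F y‖ * ‖gradient θ y‖) ^ 2 :=
              sq_le_sq' (neg_le_of_abs_le (abs_real_inner_le_norm _ _))
                (real_inner_le_norm _ _)
          _ = ‖F y‖ ^ 2 * ‖gradient θ y‖ ^ 2 := mul_pow _ _ _
          _ ≤ _ := mul_le_mul hFX (pow_le_pow_left₀ (norm_nonneg _) (hθL y) 2)
              (by positivity) (mul_nonneg (mul_nonneg hC.le hω0) hX0)
      have hprod : (G y * θ y * ⟪F y, gradient θ y⟫) ^ 2 ≤
          (θ y ^ 2 * H y) * (C * (L / N) ^ 2 * J y) := by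
        calc (G y * θ y * ⟪F y, gradient θ y⟫) ^ 2
            = θ y ^ 2 * (G y ^ 2 * ⟪F y, gradient θ y⟫ ^ 2) := by ring
          _ ≤ θ y ^ 2 * ((h y * |V y - u y| ^ 2) * (C * ω * X * (L / N) ^ 2)) := by
              refine mul_le_mul_of_nonneg_left ?_ (sq_nonneg _)
              exact mul_le_mul hgsq hI (sq_nonneg _) (mul_nonneg (hh0 y) (by positivity))
          _ = _ := by simp only [hHdef, hJdef, ← hX, ← hω]; ring
      have hA : 0 ≤ θ y ^ 2 * H y := mul_nonneg (sq_nonneg _) (hH0 y hy)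
      have hB : 0 ≤ C * (L / N) ^ 2 * J y :=
        mul_nonneg (by positivity) (mul_nonneg (sq_nonneg _) hω0)
      set A := θ y ^ 2 * H y
      set B := C * (L / N) ^ 2 * J y with hBdef
      set Z := G y * θ y * ⟪F y, gradient θ y⟫ with hZ
      have hZle : -(4 * Z) ≤ A + 4 * B := by
        refine le_trans (neg_le_abs _) (abs_le_of_sq_le_sq ?_ (by positivity))
        nlinarith [sq_nonneg (A - 4 * B)]
      have e : 2 * (A + 2 * G y * θ y * ⟪F y, gradient θ y⟫) = 2 * A + 4 * Z := by
        rw [hZ]; ring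
      rw [e]
      linarith
    have hJi := Integrable.const_mul hint (4 * C * (L / N) ^ 2)
    have hφi' := Integrable.const_mul hφi 2
    calc ∫ y in D, θ y ^ 2 * H y
        ≤ ∫ y in D, (4 * C * (L / N) ^ 2 * J y +
          2 * ⟪F y, gradient (fun y => θ y ^ 2 * G y) y⟫) :=
          setIntegral_mono_on hTi (Integrable.fun_add hJi hφi') hD.measurableSet hpt
      _ = 4 * C * (L / N) ^ 2 * ∫ y in D, J y := by
          rw [integral_add hJi hφi', integral_const_mul,
            integral_const_mul, hweak _ hφ hφc hφs, mul_zero, add_zero]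
  have hHx : H x = 0 := by
    by_contra hne
    have hpos : 0 < H x := lt_of_le_of_ne (hH0 x hx) (Ne.symm hne)
    obtain ⟨ρ, hρ, hball⟩ := Metric.mem_nhds_iff.1 (Filter.inter_mem (hD.mem_nhds hx)
      ((hHc.continuousAt (hD.mem_nhds hx)).eventually (lt_mem_nhds (half_lt_self hpos))))
    set κ := H x / 2 * volume.real (Metric.ball x ρ) with hκ
    have hκ0 : 0 < κ := mul_pos (half_pos hpos)
      (ENNReal.toReal_pos (Metric.measure_ball_pos _ _ hρ).ne' measure_ball_lt_top.ne)
    set Q := 4 * C * L ^ 2 * ∫ y in D, J y with hQ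
    have hbound : ∀ N : ℝ, 0 < N → ‖x‖ + ρ ≤ N → κ * N ^ 2 ≤ Q := by
      intro N hN hxN
      obtain ⟨θ, hθ1, hTi, hle⟩ := energy N hN
      have hBD : Metric.ball x ρ ⊆ D := fun y hy => (hball hy).1
      have h1 : κ ≤ ∫ y in Metric.ball x ρ, θ y ^ 2 * H y := by
        refine setIntegral_ge_of_const_le_real Metric.isOpen_ball.measurableSet
          measure_ball_lt_top.ne (fun y hy => ?_) (hTi.mono_set hBD)
        have hyN : ‖y‖ ≤ N := by
          have := norm_le_norm_add_norm_sub' y x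
          have := mem_ball_iff_norm.1 hy
          linarith
        rw [hθ1 y hyN, one_pow, one_mul]
        exact (hball hy).2.le
      have h2 : ∫ y in Metric.ball x ρ, θ y ^ 2 * H y ≤ ∫ y in D, θ y ^ 2 * H y :=
        setIntegral_mono_set hTi ((ae_restrict_iff' hD.measurableSet).2
          (ae_of_all _ fun y hy => mul_nonneg (sq_nonneg _) (hH0 y hy)))
          hBD.eventuallyLE
      have h3 := h1.trans (h2.trans hle)
      calc κ * N ^ 2 ≤ (4 * C * (L / N) ^ 2 * ∫ y in D, J y) * N ^ 2 := by gcongr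
        _ = Q := by rw [hQ]; field_simp
    set N := max (max (‖x‖ + ρ) 1) (Q / κ + 1)
    have hN1 : 1 ≤ N := (le_max_right _ _).trans (le_max_left _ _)
    have hNQ : Q / κ + 1 ≤ N := le_max_right _ _
    have h1 := hbound N (by linarith) ((le_max_left _ _).trans (le_max_left _ _))
    have h2 : Q + κ ≤ N * κ := by
      have := mul_le_mul_of_nonneg_right hNQ hκ0.le
      rwa [add_mul, div_mul_cancel₀ _ hκ0.ne', one_mul] at this
    nlinarith [mul_nonneg (mul_nonneg hκ0.le (by linarith : 0 ≤ N)) (by linarith : 0 ≤ N - 1)]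
  have hhx : 0 < h x := lt_min (lt_max_of_lt_left (by linarith)) one_pos
  have hX : ⟪F x, gradient V x - gradient u x⟫ = 0 :=
    (mul_eq_zero.1 hHx).resolve_left hhx.ne'
  have hF0 := (hCF (gradient V x) (gradient u x) (hub x hx)).2
  rw [show ⟪pFlux p (gradient V x) - pFlux p (gradient u x), gradient V x - gradient u x⟫ = 0
    from hX, mul_zero] at hF0
  have : ‖pFlux p (gradient V x) - pFlux p (gradient u x)‖ = 0 :=
    pow_eq_zero_iff two_ne_zero |>.1 (le_antisymm hF0 (sq_nonneg _))
  exact pFlux_injective hp (sub_eq_zero.1 (norm_eq_zero.1 this))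

end Caccioppoli

section Main
variable {n k : ℕ} {p r R : ℝ} {v : EuclideanSpace ℝ (Fin n) → ℝ}

lemma Mfun_of_ne {t : ℝ} (ht : t ≠ r) : Mfun n k r v t = sSup (v '' SigmaK n k t) := if_neg ht

lemma contDiffOn_vrR (hv : ContDiffOn ℝ 1 v (DInf n k r)) :
    ContDiffOn ℝ 1 (vrR n k r R v) (DInf n k r) :=
  (hv.sub contDiffOn_const).div_const _

lemma gradient_vrR {x : EuclideanSpace ℝ (Fin n)} (hx : DifferentiableAt ℝ v x) :
    gradient (vrR n k r R v) x = (Mfun n k r v R - Mfun n k r v r)⁻¹ • gradient v x := by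
  refine HasGradientAt.gradient ?_
  rw [hasGradientAt_iff_hasFDerivAt, map_smul]
  have h := (hx.hasGradientAt.hasFDerivAt.sub_const (Mfun n k r v r)).const_mul
    (Mfun n k r v R - Mfun n k r v r)⁻¹
  refine h.congr_of_eventuallyEq (Eventually.of_forall fun y => ?_)
  simp [vrR, div_eq_inv_mul]

/-- The normalized function is `p`-harmonic, tested on `C¹` functions. -/
lemma integral_inner_pFlux_gradient_vrR (hp : 1 < p) (hv : ContDiffOn ℝ 1 v (DInf n k r))
    (hharm : IsPHarmonic n p (DInf n k r) v) (hM : Mfun n k r v r < Mfun n k r v R)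
    {φ : EuclideanSpace ℝ (Fin n) → ℝ} (hφ : ContDiff ℝ 1 φ) (hc : HasCompactSupport φ)
    (hs : tsupport φ ⊆ DInf n k r) :
    ∫ x in DInf n k r, ⟪pFlux p (gradient (vrR n k r R v) x), gradient φ x⟫ = 0 := by
  have hD := isOpen_DInf (n := n) (k := k) r
  have h0 := integral_inner_gradient_eq_zero_of_smooth hD
    ((continuous_pFlux hp).comp_continuousOn (hv.continuousOn_gradient hD))
    (fun ψ hψ hψc hψs => by
      simpa [pFlux, real_inner_smul_left] using hharm ψ hψ hψc hψs) hφ hc hs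
  rw [← mul_zero ((Mfun n k r v R - Mfun n k r v r)⁻¹ ^ (p - 1)), ← h0, ← integral_const_mul]
  refine setIntegral_congr_fun hD.measurableSet fun x hx => ?_
  simp only [Function.comp_apply]
  rw [gradient_vrR ((hv.differentiableOn one_ne_zero).differentiableAt (hD.mem_nhds hx)),
    pFlux_smul (inv_pos.2 (sub_pos.2 hM)), real_inner_smul_left]

lemma vrR_le_one (hrR : r < R) (hfin : BddAbove (v '' SigmaK n k R))
    (hM : Mfun n k r v r < Mfun n k r v R) {x : EuclideanSpace ℝ (Fin n)}
    (hx : dk n k x = R) : vrR n k r R v x ≤ 1 := by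
  rw [vrR, div_le_one (sub_pos.2 hM)]
  have : v x ≤ Mfun n k r v R := by
    rw [Mfun_of_ne hrR.ne']
    exact le_csSup hfin ⟨x, hx, rfl⟩
  linarith

lemma eventually_vrR_lt
    (hbdd : IsBoundedUnder (· ≤ ·)
      ((nhdsSet (SigmaK n k r)) ⊓ Filter.principal (DInf n k r)) v)
    (hM : Mfun n k r v r < Mfun n k r v R) {ε : ℝ} (hε : 0 < ε)
    {x : EuclideanSpace ℝ (Fin n)} (hx : dk n k x = r) :
    ∀ᶠ y in nhds x, y ∈ DInf n k r → vrR n k r R v y < ε := by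
  have hm := sub_pos.2 hM
  have hlt : limsup v ((nhdsSet (SigmaK n k r)) ⊓ Filter.principal (DInf n k r)) <
      Mfun n k r v r + ε * (Mfun n k r v R - Mfun n k r v r) := by
    have : Mfun n k r v r = limsup v _ := if_pos rfl
    rw [← this]
    have := mul_pos hε hm
    linarith
  have h1 := eventually_lt_of_limsup_lt hlt hbdd
  rw [eventually_inf_principal] at h1
  refine (h1.filter_mono (nhds_le_nhdsSet (s := SigmaK n k r) hx)).mono fun y hy hyD => ?_
  rw [vrR, div_lt_iff₀ hm]
  linarith [hy hyD]

lemma SigmaK_nonempty (hk1 : 1 ≤ k) (hkn : k ≤ n) {t : ℝ} (ht : 0 ≤ t) :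
    (SigmaK n k t).Nonempty := by
  let i₀ : Fin n := ⟨0, by omega⟩
  refine ⟨EuclideanSpace.single i₀ t, ?_⟩
  rw [SigmaK, Set.mem_ofPred_eq, dk, Finset.sum_eq_single i₀]
  · simp [Real.sqrt_sq ht]
  · intro j _ hj
    simp [hj]
  · intro h
    exact absurd (Finset.mem_filter.2 ⟨Finset.mem_univ _, by simp only [i₀]; omega⟩) h

lemma integrableOn_Gfun (hr : 0 < r) (hv : ContDiffOn ℝ 1 v (DInf n k r))
    (hint : ∫⁻ x in DInf n k r, ENNReal.ofReal (Gfun n k p r R v x) < ⊤) :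
    IntegrableOn (Gfun n k p r R v) (DInf n k r) := by
  have hD := isOpen_DInf (n := n) (k := k) r
  have hV := contDiffOn_vrR (R := R) hv
  have hu := contDiffOn_uComp (n := n) (k := k) (p := p) (R := R) hr
  have hc : ContinuousOn (Gfun n k p r R v) (DInf n k r) := by
    refine ((hV.continuousOn.sub hu.continuousOn).abs.pow 2).mul (ContinuousOn.add ?_ ?_)
    · exact (hV.continuousOn_gradient hD).norm.rpow_const fun _ _ => Or.inr (abs_nonneg _)
    · exact (hu.continuousOn_gradient hD).norm.rpow_const fun _ _ => Or.inr (abs_nonneg _)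
  refine ⟨hc.aestronglyMeasurable hD.measurableSet, ?_⟩
  rw [hasFiniteIntegral_iff_ofReal]
  · exact hint
  · refine ae_of_all _ fun x => ?_
    simp only [Gfun, Pi.zero_apply]
    positivity

lemma vrR_le_uComp_add (hk1 : 1 ≤ k) (hkn : k ≤ n) (hp : 1 < p) (hr : 0 < r) (hrR : r < R)
    (hv : ContDiffOn ℝ 1 v (DInf n k r)) (hharm : IsPHarmonic n p (DInf n k r) v)
    (hfin : BddAbove (v '' SigmaK n k R))
    (hbdd : IsBoundedUnder (· ≤ ·)
      ((nhdsSet (SigmaK n k r)) ⊓ Filter.principal (DInf n k r)) v)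
    (hM : Mfun n k r v r < Mfun n k r v R)
    (hint : ∫⁻ x in DInf n k r, ENNReal.ofReal (Gfun n k p r R v x) < ⊤)
    {ε : ℝ} (hε : 0 < ε) {x : EuclideanSpace ℝ (Fin n)} (hrx : r < dk n k x)
    (hxR : dk n k x < R) : vrR n k r R v x ≤ uComp n k p r R x + ε := by
  set V := vrR n k r R v with hVdef
  set u := uComp n k p r R with hudef
  set D : Set (EuclideanSpace ℝ (Fin n)) := DInf n k r ∩ {y | dk n k y < R} with hDdef
  have hDInf := isOpen_DInf (n := n) (k := k) r
  have hD : IsOpen D := hDInf.inter (isOpen_lt continuous_dk continuous_const)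
  have hDsub : D ⊆ DInf n k r := Set.inter_subset_left
  have hV : ContDiffOn ℝ 1 V (DInf n k r) := contDiffOn_vrR hv
  have hu : ContDiffOn ℝ 1 u (DInf n k r) := contDiffOn_uComp hr
  have huR : ∀ y, dk n k y = R → u y = 1 := fun y hy => by
    rw [hudef, uComp, hy, u0_self hr hrR]
  obtain ⟨β, hβ, hβu⟩ := exists_le_norm_gradient_uComp (n := n) hk1 hp hr hrR
  have hweak : ∀ φ : EuclideanSpace ℝ (Fin n) → ℝ, ContDiff ℝ 1 φ → HasCompactSupport φ →
      tsupport φ ⊆ D →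
      ∫ y in D, ⟪pFlux p (gradient V y) - pFlux p (gradient u y), gradient φ y⟫ = 0 := by
    intro φ hφ hc hs
    have hs' := hs.trans hDsub
    have hgrad : Continuous (gradient φ) := continuousOn_univ.1
      (hφ.contDiffOn.continuousOn_gradient isOpen_univ)
    have hi : ∀ f : EuclideanSpace ℝ (Fin n) → ℝ, ContDiffOn ℝ 1 f (DInf n k r) →
        IntegrableOn (fun y => ⟪pFlux p (gradient f y), gradient φ y⟫) (DInf n k r) :=
      fun f hf => (ContinuousOn.integrable_of_compact_support_subset
        (((continuous_pFlux hp).comp_continuousOn (hf.continuousOn_gradient hDInf)).inner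
          hgrad.continuousOn) hc.isCompact hs' fun y hy => by
            rw [gradient_eq_zero_of_notMem_tsupport hy, inner_zero_right]).integrableOn
    rw [← setIntegral_eq_of_subset_of_forall_sdiff_eq_zero hDInf.measurableSet hDsub]
    · simp_rw [inner_sub_left]
      rw [integral_sub (hi V hV) (hi u hu),
        integral_inner_pFlux_gradient_vrR hp hv hharm hM hφ hc hs',
        integral_inner_pFlux_gradient_uComp hkn hp hr hrR hφ hc hs', sub_zero]
    · intro y hy
      rw [gradient_eq_zero_of_notMem_tsupport fun h => hy.2 (hs h), inner_zero_right]
  have hsupp : tsupport (D.indicator fun y => softPos (V y - u y - ε)) ⊆ D := by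
    intro y hy
    by_contra hyD
    suffices hev : ∀ᶠ z in nhds y, z ∈ D → V z - u z - ε ≤ 0 by
      refine notMem_tsupport_iff_eventuallyEq.2 ?_ hy
      filter_upwards [hev] with z hz
      by_cases hzD : z ∈ D
      · rw [Set.indicator_of_mem hzD, softPos_of_nonpos (hz hzD), Pi.zero_apply]
      · rw [Set.indicator_of_notMem hzD, Pi.zero_apply]
    rcases lt_trichotomy (dk n k y) r with h | h | h
    · filter_upwards [continuous_dk.continuousAt.eventually (gt_mem_nhds h)] with z hz hzD
      exact absurd hzD.1 (not_lt.2 hz.le)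
    · filter_upwards [eventually_vrR_lt hbdd hM hε h] with z hz hzD
      have h1 := hz hzD.1
      have h2 : 0 ≤ u z := u0_nonneg hr hrR (le_of_lt hzD.1)
      linarith
    · rcases lt_or_eq_of_le (not_lt.1 fun h' => hyD ⟨h, h'⟩ : R ≤ dk n k y) with h' | h'
      · filter_upwards [continuous_dk.continuousAt.eventually (lt_mem_nhds h')] with z hz hzD
        exact absurd hzD.2 (not_lt.2 hz.le)
      · have hc : ContinuousAt (fun z => V z - u z) y :=
          (hV.continuousOn.sub hu.continuousOn).continuousAt (hDInf.mem_nhds h)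
        have hy0 : V y - u y < ε := by
          have h1 : V y ≤ 1 := vrR_le_one hrR hfin hM h'.symm
          have h2 := huR y h'.symm
          linarith
        filter_upwards [hc.eventually (gt_mem_nhds hy0)] with z hz _
        linarith
  have hGi : IntegrableOn (fun y => |V y - u y| ^ 2 *
      (‖gradient V y‖ ^ |p - 2| + ‖gradient u y‖ ^ |p - 2|)) D :=
    (integrableOn_Gfun hr hv hint).mono_set hDsub
  by_contra! hlt
  set P := headProj n k x
  set s₁ := R / dk n k x - 1 with hs₁
  have hx0 : 0 < dk n k x := hr.trans hrx
  have hs₁0 : 0 ≤ s₁ := by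
    rw [hs₁, sub_nonneg, one_le_div hx0]
    exact hxR.le
  have hdk : ∀ s : ℝ, 0 ≤ s → dk n k (x + s • P) = (1 + s) * dk n k x := fun s hs =>
    dk_add_smul_headProj x (by linarith)
  have hmem : ∀ s : ℝ, 0 ≤ s → x + s • P ∈ DInf n k r := fun s hs => by
    change r < dk n k (x + s • P)
    rw [hdk s hs]
    nlinarith
  have hend : dk n k (x + s₁ • P) = R := by
    rw [hdk s₁ hs₁0, hs₁]
    field_simp
    ring
  have hconst := constant_of_has_deriv_right_zero
    (f := fun s : ℝ => softPos (V (x + s • P) - u (x + s • P) - ε)) (a := 0) (b := s₁) ?_ ?_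
    s₁ ⟨hs₁0, le_rfl⟩
  · have h1 : V (x + s₁ • P) ≤ 1 := vrR_le_one hrR hfin hM hend
    have h2 := huR _ hend
    simp only [zero_smul, add_zero] at hconst
    rw [softPos_of_nonpos (by linarith)] at hconst
    exact (softPos_pos (by linarith : 0 < V x - u x - ε)).ne hconst
  · refine contDiff_softPos.continuous.comp_continuousOn (ContinuousOn.sub ?_ continuousOn_const)
    exact (hV.continuousOn.sub hu.continuousOn).comp (by fun_prop) fun s hs => hmem s hs.1
  · intro s hs
    set y := x + s • P with hy
    have hyD : y ∈ D := by
      refine ⟨hmem s hs.1, ?_⟩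
      change dk n k y < R
      rw [hdk s hs.1]
      have := hs.2
      rw [hs₁, lt_sub_iff_add_lt, lt_div_iff₀ hx0] at this
      linarith
    have hline : HasDerivAt (fun τ : ℝ => x + τ • P) P s := by
      simpa using ((hasDerivAt_id s).smul_const P).const_add x
    have hVd := ((hV.differentiableOn one_ne_zero).differentiableAt
      (hDInf.mem_nhds hyD.1)).hasGradientAt.hasFDerivAt
    have hud := ((hu.differentiableOn one_ne_zero).differentiableAt
      (hDInf.mem_nhds hyD.1)).hasGradientAt.hasFDerivAt
    have hd := (hasDerivAt_softPos (V y - u y - ε)).comp s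
      (((hVd.sub hud).sub_const ε).comp_hasDerivAt s hline)
    refine (hd.congr_deriv ?_).hasDerivWithinAt
    rcases le_or_gt (V y - u y) ε with hle | hgt
    · simp [hle]
    · rw [gradient_eq_of_weighted_integrable hD (hV.mono hDsub) (hu.mono hDsub) hp hβ hε.le
        (fun z hz => hβu z (hr.trans hz.1) (le_of_lt hz.2)) hweak hsupp hGi hyD hgt]
      simp

end Main

/-- Corollary (corb): if `v` is a continuously differentiable `p`-harmonic function on
`D_{r,∞}` with `M(t)` finite for all `t ≥ r`, `M(R) > M(r)`, and
`∫_{D_{r,∞}} |v_{r,R}-u|²(|∇v_{r,R}|^{|p-2|}+|∇u|^{|p-2|}) dm < ∞`,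
then `M(t) ≤ (M(R)-M(r)) u₀(t) + M(r)` for all `t ∈ (r,R)`. -/
theorem stmt_3 (n k : ℕ) (hn : 2 ≤ n) (hk1 : 1 ≤ k) (hkn : k ≤ n) (p r R : ℝ)
    (hp : 1 < p) (hr : 0 < r) (hrR : r < R)
    (v : EuclideanSpace ℝ (Fin n) → ℝ)
    (hv : ContDiffOn ℝ 1 v (DInf n k r))
    (hharm : IsPHarmonic n p (DInf n k r) v)
    (hfin : ∀ t, r < t → BddAbove (v '' SigmaK n k t))
    (hbdd : IsBoundedUnder (· ≤ ·)
      ((nhdsSet (SigmaK n k r)) ⊓ Filter.principal (DInf n k r)) v)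
    (hcobdd : IsCoboundedUnder (· ≤ ·)
      ((nhdsSet (SigmaK n k r)) ⊓ Filter.principal (DInf n k r)) v)
    (hM : Mfun n k r v r < Mfun n k r v R)
    (hint : ∫⁻ x in DInf n k r, ENNReal.ofReal (Gfun n k p r R v x) < ⊤) :
    ∀ t ∈ Set.Ioo r R,
      Mfun n k r v t ≤ (Mfun n k r v R - Mfun n k r v r) * u0 k p r R t + Mfun n k r v r := by
  intro t ht
  have hm := sub_pos.2 hM
  rw [Mfun_of_ne ht.1.ne']
  refine csSup_le ((SigmaK_nonempty hk1 hkn (hr.trans ht.1).le).image v) ?_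
  rintro _ ⟨x, hx, rfl⟩
  have hxt : dk n k x = t := hx
  have hle : vrR n k r R v x ≤ uComp n k p r R x := le_of_forall_pos_le_add fun ε hε =>
    vrR_le_uComp_add hk1 hkn hp hr hrR hv hharm (hfin R hrR) hbdd hM hint hε
      (hxt ▸ ht.1) (hxt ▸ ht.2)
  rw [vrR, div_le_iff₀ hm, uComp, hxt] at hle
  linarith
end

section
/- Let p > 1 and a > b > 0. Then C1 · (a^{p−1} − b^{p−1})/(a − b) ≤ (a^{p−1} + b^{p−1})/(a + b) ≤ C2 · (a^{p−1} − b^{p−1})/(a − b), where C1 = min{1, 1/(p−1)} and C2 = max{1, 1/(p−1)}. -/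
open Real

theorem sinh_mul_mul_cosh_le {s t : ℝ} (hs : 1 ≤ s) (ht : 0 ≤ t) :
    sinh (s * t) * cosh t ≤ s * (cosh (s * t) * sinh t) := by
  have hderiv : ∀ x : ℝ, HasDerivAt
      (fun x => s * (cosh (s * x) * sinh x) - sinh (s * x) * cosh x)
      ((s ^ 2 - 1) * (sinh (s * x) * sinh x)) x := by
    intro x
    have hmul : HasDerivAt (fun x => s * x) s x := by
      simpa using (hasDerivAt_id x).const_mul s
    refine (((hmul.cosh.mul (hasDerivAt_sinh x)).const_mul s).sub
      (hmul.sinh.mul (hasDerivAt_cosh x))).congr_deriv ?_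
    ring
  have hmono := monotoneOn_of_deriv_nonneg (convex_Ici (0 : ℝ))
    (fun x _ => (hderiv x).continuousAt.continuousWithinAt)
    (fun x _ => (hderiv x).differentiableAt.differentiableWithinAt) (by
      intro x hx
      have hx0 : 0 ≤ x := interior_subset hx
      rw [(hderiv x).deriv]
      have h₁ : 0 ≤ sinh (s * x) := sinh_nonneg_iff.2 (by positivity)
      have h₂ : 0 ≤ sinh x := sinh_nonneg_iff.2 hx0
      have h₃ : 0 ≤ s ^ 2 - 1 := by nlinarith
      positivity)
  have h := hmono (Set.mem_Ici.2 le_rfl) (Set.mem_Ici.2 ht) ht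
  simp only [mul_zero, sinh_zero, zero_mul, sub_zero] at h
  linarith

theorem sinh_mul_cosh_le_of_le {x y : ℝ} (h : x ≤ y) :
    sinh x * cosh y ≤ sinh y * cosh x := by
  have := sinh_nonneg_iff.2 (sub_nonneg.2 h)
  rw [sinh_sub] at this
  linarith

theorem rpow_sub_rpow_eq_sinh {a b : ℝ} (ha : 0 < a) (hb : 0 < b) (s : ℝ) :
    a ^ s - b ^ s =
      2 * exp (s * ((log a + log b) / 2)) * sinh (s * ((log a - log b) / 2)) := by
  rw [rpow_def_of_pos ha, rpow_def_of_pos hb, sinh_eq, mul_div_assoc', mul_right_comm,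
    mul_div_right_comm, mul_div_cancel_left₀ _ (two_ne_zero' ℝ), sub_mul, ← exp_add, ← exp_add]
  ring_nf

theorem rpow_add_rpow_eq_cosh {a b : ℝ} (ha : 0 < a) (hb : 0 < b) (s : ℝ) :
    a ^ s + b ^ s =
      2 * exp (s * ((log a + log b) / 2)) * cosh (s * ((log a - log b) / 2)) := by
  rw [rpow_def_of_pos ha, rpow_def_of_pos hb, cosh_eq, mul_div_assoc', mul_right_comm,
    mul_div_right_comm, mul_div_cancel_left₀ _ (two_ne_zero' ℝ), add_mul, ← exp_add, ← exp_add]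
  ring_nf

theorem min_mul_sinh_mul_cosh_le {s t : ℝ} (hs : 0 < s) (ht : 0 ≤ t) :
    min 1 (1 / s) * (sinh (s * t) * cosh t) ≤ cosh (s * t) * sinh t := by
  rcases le_total 1 s with h | h
  · rw [min_eq_right ((div_le_one hs).2 h), one_div, inv_mul_le_iff₀ hs]
    exact sinh_mul_mul_cosh_le h ht
  · rw [min_eq_left ((one_le_div hs).2 h), one_mul, mul_comm (cosh (s * t))]
    exact sinh_mul_cosh_le_of_le (mul_le_of_le_one_left ht h)

theorem cosh_mul_sinh_le_max_mul {s t : ℝ} (hs : 0 < s) (ht : 0 ≤ t) :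
    cosh (s * t) * sinh t ≤ max 1 (1 / s) * (sinh (s * t) * cosh t) := by
  rcases le_total 1 s with h | h
  · rw [max_eq_left ((div_le_one hs).2 h), one_mul, mul_comm (cosh (s * t))]
    exact sinh_mul_cosh_le_of_le (le_mul_of_one_le_left ht h)
  · have := sinh_mul_mul_cosh_le ((one_le_inv₀ hs).2 h) (mul_nonneg hs.le ht)
    rw [inv_mul_cancel_left₀ hs.ne'] at this
    rw [max_eq_right ((one_le_div hs).2 h), one_div]
    linarith

/-- Lemma (eq19): for `p > 1` and `a > b > 0`,
`C1 * (a^(p-1) - b^(p-1))/(a-b) ≤ (a^(p-1)+b^(p-1))/(a+b) ≤ C2 * (a^(p-1)-b^(p-1))/(a-b)`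
with `C1 = min 1 (1/(p-1))` and `C2 = max 1 (1/(p-1))`. -/
theorem stmt_5 (p a b : ℝ) (hp : 1 < p) (hb : 0 < b) (hba : b < a) :
    min 1 (1 / (p - 1)) * ((a ^ (p - 1) - b ^ (p - 1)) / (a - b))
      ≤ (a ^ (p - 1) + b ^ (p - 1)) / (a + b) ∧
    (a ^ (p - 1) + b ^ (p - 1)) / (a + b)
      ≤ max 1 (1 / (p - 1)) * ((a ^ (p - 1) - b ^ (p - 1)) / (a - b)) := by
  have ha : 0 < a := hb.trans hba
  have hs : 0 < p - 1 := sub_pos.2 hp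
  have ht : 0 < (log a - log b) / 2 := half_pos (sub_pos.2 (log_lt_log hb hba))
  have hsub := rpow_sub_rpow_eq_sinh ha hb 1
  have hadd := rpow_add_rpow_eq_cosh ha hb 1
  simp only [rpow_one, one_mul] at hsub hadd
  rw [rpow_sub_rpow_eq_sinh ha hb, rpow_add_rpow_eq_cosh ha hb, hsub, hadd,
    mul_div_mul_comm _ (sinh _), mul_div_mul_comm _ (cosh _), mul_left_comm,
    mul_left_comm (max _ _)]
  have hsinh := sinh_pos_iff.2 ht
  have hcosh := cosh_pos ((log a - log b) / 2)
  constructor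
  · gcongr ?_ * ?_
    rw [← mul_div_assoc (min _ _), div_le_div_iff₀ hsinh hcosh, mul_assoc]
    exact min_mul_sinh_mul_cosh_le hs ht.le
  · gcongr ?_ * ?_
    rw [← mul_div_assoc (max _ _), div_le_div_iff₀ hcosh hsinh, mul_assoc]
    exact cosh_mul_sinh_le_max_mul hs ht.le
end

section
/- Let p ≥ 2 and a > b > 0. Then C3 · (a^{p−2} + b^{p−2}) ≤ (a^{p−1} − b^{p−1})/(a − b) ≤ C4 · (a^{p−2} + b^{p−2}), where C3 = min{(p−1)/2, 1} and C4 = max{(p−1)/2, 1}. -/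
/-- The tangent line of `t ↦ t ^ q` at `x` lies below its graph when `1 ≤ q`. -/
lemma rpow_tangent_le {q x y : ℝ} (hq : 1 ≤ q) (hx : 0 < x) (hy : 0 < y) :
    x ^ q + q * x ^ (q - 1) * (y - x) ≤ y ^ q := by
  have h := one_add_mul_self_le_rpow_one_add (s := y / x - 1) (by linarith [div_pos hy hx]) hq
  rw [add_sub_cancel, Real.div_rpow hy.le hx.le, le_div_iff₀ (Real.rpow_pos_of_pos hx q)] at h
  rw [Real.rpow_sub_one hx.ne']
  refine le_trans (le_of_eq ?_) h
  field_simp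

/-- The tangent line of `t ↦ t ^ q` at `x` lies above its graph when `0 ≤ q ≤ 1`. -/
lemma rpow_le_tangent {q x y : ℝ} (hq0 : 0 ≤ q) (hq1 : q ≤ 1) (hx : 0 < x) (hy : 0 < y) :
    y ^ q ≤ x ^ q + q * x ^ (q - 1) * (y - x) := by
  have h := rpow_one_add_le_one_add_mul_self (s := y / x - 1)
    (by linarith [div_pos hy hx]) hq0 hq1
  rw [add_sub_cancel, Real.div_rpow hy.le hx.le, div_le_iff₀ (Real.rpow_pos_of_pos hx q)] at h
  rw [Real.rpow_sub_one hx.ne']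
  refine h.trans (le_of_eq ?_)
  field_simp

/-- Derivative in `x` of the trapezoid-rule error for `t ↦ (q + 1) * t ^ q` on `[b, x]`. -/
lemma hasDerivAt_trapezoid_error (q b : ℝ) {x : ℝ} (hx : 0 < x) :
    HasDerivAt (fun x : ℝ => (q + 1) / 2 * ((x - b) * (x ^ q + b ^ q)) - x ^ (q + 1))
      ((q + 1) / 2 * (b ^ q - (x ^ q + q * x ^ (q - 1) * (b - x)))) x := by
  have h₁ := Real.hasDerivAt_rpow_const (p := q) (Or.inl hx.ne')
  have h₂ := Real.hasDerivAt_rpow_const (p := q + 1) (Or.inl hx.ne')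
  refine (((((hasDerivAt_id' x).sub_const b).mul (h₁.add_const (b ^ q))).const_mul
    ((q + 1) / 2)).sub h₂).congr_deriv ?_
  rw [add_sub_cancel_right]
  ring

/-- Trapezoid bound for `t ↦ t ^ q` in the convex range `1 ≤ q`. -/
lemma rpow_add_one_sub_le_trapezoid {q a b : ℝ} (hq : 1 ≤ q) (hb : 0 < b) (hba : b ≤ a) :
    a ^ (q + 1) - b ^ (q + 1) ≤ (q + 1) / 2 * ((a - b) * (a ^ q + b ^ q)) := by
  have hpos : ∀ x ∈ Set.Ici b, 0 < x := fun x hx => hb.trans_le hx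
  have h := monotoneOn_of_hasDerivWithinAt_nonneg (convex_Ici b)
    (fun x hx => (hasDerivAt_trapezoid_error q b (hpos x hx)).continuousAt.continuousWithinAt)
    (fun x hx => (hasDerivAt_trapezoid_error q b
      (hpos x (interior_subset hx))).hasDerivWithinAt)
    (fun x hx => mul_nonneg (by linarith)
      (sub_nonneg.2 (rpow_tangent_le hq (hpos x (interior_subset hx)) hb)))
    Set.self_mem_Ici hba hba
  simp only [sub_self, zero_mul, mul_zero] at h
  linarith

/-- Trapezoid bound for `t ↦ t ^ q` in the concave range `0 ≤ q ≤ 1`. -/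
lemma trapezoid_le_rpow_add_one_sub {q a b : ℝ} (hq0 : 0 ≤ q) (hq1 : q ≤ 1) (hb : 0 < b)
    (hba : b ≤ a) :
    (q + 1) / 2 * ((a - b) * (a ^ q + b ^ q)) ≤ a ^ (q + 1) - b ^ (q + 1) := by
  have hpos : ∀ x ∈ Set.Ici b, 0 < x := fun x hx => hb.trans_le hx
  have h := antitoneOn_of_hasDerivWithinAt_nonpos (convex_Ici b)
    (fun x hx => (hasDerivAt_trapezoid_error q b (hpos x hx)).continuousAt.continuousWithinAt)
    (fun x hx => (hasDerivAt_trapezoid_error q b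
      (hpos x (interior_subset hx))).hasDerivWithinAt)
    (fun x hx => mul_nonpos_of_nonneg_of_nonpos (by linarith)
      (sub_nonpos.2 (rpow_le_tangent hq0 hq1 (hpos x (interior_subset hx)) hb)))
    Set.self_mem_Ici hba hba
  simp only [sub_self, zero_mul, mul_zero] at h
  linarith

lemma rpow_add_one_sub_eq {q a b : ℝ} (ha : 0 < a) (hb : 0 < b) :
    a ^ (q + 1) - b ^ (q + 1) =
      (a - b) * (a ^ q + b ^ q) + a * b * (a ^ (q - 1) - b ^ (q - 1)) := by
  rw [Real.rpow_add_one ha.ne', Real.rpow_add_one hb.ne', Real.rpow_sub_one ha.ne',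
    Real.rpow_sub_one hb.ne']
  field_simp
  ring

/-- Lemma (eq20): for `p ≥ 2` and `a > b > 0`,
`C3 * (a^(p-2)+b^(p-2)) ≤ (a^(p-1)-b^(p-1))/(a-b) ≤ C4 * (a^(p-2)+b^(p-2))`
with `C3 = min ((p-1)/2) 1` and `C4 = max ((p-1)/2) 1`. -/
theorem stmt_6 (p a b : ℝ) (hp : 2 ≤ p) (hb : 0 < b) (hba : b < a) :
    min ((p - 1) / 2) 1 * (a ^ (p - 2) + b ^ (p - 2))
      ≤ (a ^ (p - 1) - b ^ (p - 1)) / (a - b) ∧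
    (a ^ (p - 1) - b ^ (p - 1)) / (a - b)
      ≤ max ((p - 1) / 2) 1 * (a ^ (p - 2) + b ^ (p - 2)) := by
  obtain ⟨q, rfl⟩ : ∃ q, p = q + 2 := ⟨p - 2, by ring⟩
  have ha : 0 < a := hb.trans hba
  have hab : 0 < a * b := mul_pos ha hb
  rw [show q + 2 - 1 = q + 1 by ring, add_sub_cancel_right, le_div_iff₀ (sub_pos.2 hba),
    div_le_iff₀ (sub_pos.2 hba), mul_assoc, mul_assoc, mul_comm (a ^ q + b ^ q)]
  have hid := rpow_add_one_sub_eq (q := q) ha hb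
  rcases le_total 1 q with hq | hq
  · rw [min_eq_right (by linarith), max_eq_left (by linarith)]
    have hmono : b ^ (q - 1) ≤ a ^ (q - 1) :=
      Real.rpow_le_rpow hb.le hba.le (sub_nonneg.2 hq)
    exact ⟨by linarith [mul_nonneg hab.le (sub_nonneg.2 hmono)],
      rpow_add_one_sub_le_trapezoid hq hb hba.le⟩
  · rw [min_eq_left (by linarith), max_eq_right (by linarith)]
    have hanti : a ^ (q - 1) ≤ b ^ (q - 1) :=
      Real.rpow_le_rpow_of_nonpos hb hba.le (sub_nonpos.2 hq)
    exact ⟨trapezoid_le_rpow_add_one_sub (by linarith) hq hb hba.le,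
      by linarith [mul_nonpos_of_nonneg_of_nonpos hab.le (sub_nonpos.2 hanti)]⟩
end

section
/- Let 1 < p ≤ 2 and a > b > 0. Then C3 · (a^{2−p} + b^{2−p})^{−1} ≤ (a^{p−1} − b^{p−1})/(a − b) ≤ C4 · (a^{2−p} + b^{2−p})^{−1}, where C3 = min{2(p−1), 1} and C4 = max{2(p−1), 1}. -/
/-- The hyperbolic sine is convex on the nonnegative half-line. -/
theorem convexOn_sinh : ConvexOn ℝ (Set.Ici 0) Real.sinh := by
  apply MonotoneOn.convexOn_of_deriv (convex_Ici 0) Real.continuous_sinh.continuousOn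
    Real.differentiable_sinh.differentiableOn
  rw [interior_Ici, Real.deriv_sinh]
  intro x hx y hy hxy
  rw [Real.cosh_le_cosh, abs_of_pos hx, abs_of_pos hy]
  exact hxy

theorem sinh_mul_le {s x : ℝ} (hs0 : 0 ≤ s) (hs1 : s ≤ 1) (hx : 0 ≤ x) :
    Real.sinh (s * x) ≤ s * Real.sinh x := by
  have h := convexOn_sinh.2 (Set.mem_Ici.2 hx) (Set.mem_Ici.2 le_rfl) hs0
    (sub_nonneg.2 hs1) (add_sub_cancel s 1)
  simpa using h

/-- The difference of the two weighted geometric means of `a` and `b` with swapped weights. -/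
theorem rpow_mul_rpow_sub_swap_eq_sinh {a b : ℝ} (ha : 0 < a) (hb : 0 < b) (q : ℝ) :
    a ^ q * b ^ (1 - q) - a ^ (1 - q) * b ^ q =
      2 * Real.exp ((Real.log a + Real.log b) / 2) *
        Real.sinh ((2 * q - 1) * ((Real.log a - Real.log b) / 2)) := by
  simp only [Real.rpow_def_of_pos ha, Real.rpow_def_of_pos hb, Real.sinh_eq, ← Real.exp_add]
  rw [mul_assoc, mul_left_comm, mul_div_cancel₀ _ two_ne_zero, mul_sub (Real.exp _),
    ← Real.exp_add, ← Real.exp_add]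
  ring_nf

theorem rpow_mul_rpow_sub_swap_bounds {a b q : ℝ} (hb : 0 < b) (hba : b < a)
    (hq : 1 / 2 ≤ q) (hq1 : q ≤ 1) :
    0 ≤ a ^ q * b ^ (1 - q) - a ^ (1 - q) * b ^ q ∧
      a ^ q * b ^ (1 - q) - a ^ (1 - q) * b ^ q ≤ (2 * q - 1) * (a - b) := by
  have ha : 0 < a := hb.trans hba
  have hx : 0 ≤ (Real.log a - Real.log b) / 2 := by
    linarith [Real.log_lt_log hb hba]
  have hab := rpow_mul_rpow_sub_swap_eq_sinh ha hb 1
  norm_num at hab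
  rw [rpow_mul_rpow_sub_swap_eq_sinh ha hb, hab]
  constructor
  · have := Real.sinh_nonneg_iff.2 (mul_nonneg (by linarith : 0 ≤ 2 * q - 1) hx)
    positivity
  · rw [mul_left_comm]
    gcongr
    exact sinh_mul_le (by linarith) (by linarith) hx

/-- Lemma (eq20'): for `1 < p ≤ 2` and `a > b > 0`,
`C3 * (a^(2-p)+b^(2-p))⁻¹ ≤ (a^(p-1)-b^(p-1))/(a-b) ≤ C4 * (a^(2-p)+b^(2-p))⁻¹`
with `C3 = min (2*(p-1)) 1` and `C4 = max (2*(p-1)) 1`. -/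
theorem stmt_7 (p a b : ℝ) (hp1 : 1 < p) (hp2 : p ≤ 2) (hb : 0 < b) (hba : b < a) :
    min (2 * (p - 1)) 1 * (a ^ (2 - p) + b ^ (2 - p))⁻¹
      ≤ (a ^ (p - 1) - b ^ (p - 1)) / (a - b) ∧
    (a ^ (p - 1) - b ^ (p - 1)) / (a - b)
      ≤ max (2 * (p - 1)) 1 * (a ^ (2 - p) + b ^ (2 - p))⁻¹ := by
  have ha : 0 < a := hb.trans hba
  have hsub : 0 < a - b := sub_pos.2 hba
  have hsum : 0 < a ^ (2 - p) + b ^ (2 - p) := by positivity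
  have rpow_mul_eq : ∀ x : ℝ, 0 < x → x ^ (p - 1) * x ^ (2 - p) = x := fun x hx => by
    rw [← Real.rpow_add hx, sub_add_sub_cancel']
    norm_num
  have key : (a ^ (p - 1) - b ^ (p - 1)) * (a ^ (2 - p) + b ^ (2 - p)) =
      a - b + (a ^ (p - 1) * b ^ (2 - p) - a ^ (2 - p) * b ^ (p - 1)) := by
    linear_combination rpow_mul_eq a ha - rpow_mul_eq b hb
  rw [← div_eq_mul_inv, ← div_eq_mul_inv, div_le_div_iff₀ hsum hsub, div_le_div_iff₀ hsub hsum,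
    key]
  rcases le_total (1 / 2) (p - 1) with h | h
  · obtain ⟨h₁, h₂⟩ := rpow_mul_rpow_sub_swap_bounds hb hba h (by linarith)
    rw [show 1 - (p - 1) = 2 - p by ring] at h₁ h₂
    rw [min_eq_right (by linarith), max_eq_left (by linarith)]
    constructor <;> linarith
  · obtain ⟨h₁, h₂⟩ := rpow_mul_rpow_sub_swap_bounds (q := 2 - p) hb hba
      (by linarith) (by linarith)
    rw [show 1 - (2 - p) = p - 1 by ring] at h₁ h₂
    rw [min_eq_left (by linarith), max_eq_right (by linarith)]
    constructor <;> linarith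
end

section
/- Let p > 1 and define g1(x) = (x^{p−1} + 1)(x − 1) / ((x^{p−1} − 1)(x + 1)) for x > 1. Then for every x > 1: if 1 < p < 2 then 1 < g1(x) < 1/(p−1); if p = 2 then g1(x) = 1; and if p > 2 then 1/(p−1) < g1(x) < 1. -/
/-- The strict Bernoulli inequality at `x⁻¹`, multiplied through by `x ^ q`. -/
lemma rpow_bernoulli_inv {q x : ℝ} (hq : 1 < q) (hx : 1 < x) :
    0 < (q - 1) * x ^ q - q * x ^ (q - 1) + 1 := by
  have hx0 : 0 < x := by linarith
  have bernoulli : 1 + q * (x⁻¹ - 1) < (1 + (x⁻¹ - 1)) ^ q := by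
    apply one_add_mul_self_lt_rpow_one_add _ _ hq
    · linarith [inv_pos.2 hx0]
    · exact (sub_neg.2 (inv_lt_one_of_one_lt₀ hx)).ne
  have hpow : 0 < x ^ q := Real.rpow_pos_of_pos hx0 q
  rw [add_sub_cancel, Real.inv_rpow hx0.le] at bernoulli
  have scaled := mul_lt_mul_of_pos_right bernoulli hpow
  rw [inv_mul_cancel₀ hpow.ne'] at scaled
  have hpred : x ^ (q - 1) = x⁻¹ * x ^ q := by
    rw [Real.rpow_sub_one hx0.ne', div_eq_inv_mul]
  rw [hpred]
  linarith

lemma rpow_sub_one_mul_add_one_lt {q x : ℝ} (hq : 1 < q) (hx : 1 < x) :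
    (x ^ q - 1) * (x + 1) < q * ((x ^ q + 1) * (x - 1)) := by
  let F : ℝ → ℝ := fun t => q * ((t ^ q + 1) * (t - 1)) - (t ^ q - 1) * (t + 1)
  have hderiv : ∀ t : ℝ, 1 < t →
      HasDerivAt F ((q + 1) * ((q - 1) * t ^ q - q * t ^ (q - 1) + 1)) t := by
    intro t ht
    have ht0 : t ≠ 0 := by linarith
    have hpow := Real.hasDerivAt_rpow_const (x := t) (p := q) (Or.inl ht0)
    have hid := hasDerivAt_id' t
    refine ((((hpow.add_const 1).mul (hid.sub_const 1)).const_mul q).sub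
      ((hpow.sub_const 1).mul (hid.add_const 1))).congr_deriv ?_
    rw [Real.rpow_sub_one ht0]
    field_simp
    ring
  have hmono : StrictMonoOn F (Set.Ici 1) := by
    apply strictMonoOn_of_deriv_pos (convex_Ici 1)
    · have hcont : Continuous fun t : ℝ => t ^ q :=
        Real.continuous_rpow_const (by linarith)
      fun_prop
    · intro t ht
      rw [interior_Ici, Set.mem_Ioi] at ht
      rw [(hderiv t ht).deriv]
      exact mul_pos (by linarith) (rpow_bernoulli_inv hq ht)
  have hlt := hmono (Set.mem_Ici.2 le_rfl) (Set.mem_Ici.2 hx.le) hx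
  simp only [F, Real.one_rpow] at hlt
  linarith

lemma mul_rpow_add_one_mul_sub_one_lt {q x : ℝ} (hq0 : 0 < q) (hq1 : q < 1) (hx : 1 < x) :
    q * ((x ^ q + 1) * (x - 1)) < (x ^ q - 1) * (x + 1) := by
  have hlt := rpow_sub_one_mul_add_one_lt ((one_lt_inv₀ hq0).2 hq1) (Real.one_lt_rpow hx hq0)
  rw [Real.rpow_rpow_inv (by linarith) hq0.ne', inv_mul_eq_div, lt_div_iff₀ hq0] at hlt
  linarith

/-- Bounds for `g1(x) = (x^(p-1)+1)(x-1)/((x^(p-1)-1)(x+1))`, `x > 1`, `p > 1`. -/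
theorem stmt_8 (p : ℝ) (hp : 1 < p) (x : ℝ) (hx : 1 < x) :
    (p < 2 → 1 < (x ^ (p - 1) + 1) * (x - 1) / ((x ^ (p - 1) - 1) * (x + 1)) ∧
      (x ^ (p - 1) + 1) * (x - 1) / ((x ^ (p - 1) - 1) * (x + 1)) < 1 / (p - 1)) ∧
    (p = 2 → (x ^ (p - 1) + 1) * (x - 1) / ((x ^ (p - 1) - 1) * (x + 1)) = 1) ∧
    (2 < p → 1 / (p - 1) < (x ^ (p - 1) + 1) * (x - 1) / ((x ^ (p - 1) - 1) * (x + 1)) ∧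
      (x ^ (p - 1) + 1) * (x - 1) / ((x ^ (p - 1) - 1) * (x + 1)) < 1) := by
  have hq : 0 < p - 1 := by linarith
  have hden : 0 < (x ^ (p - 1) - 1) * (x + 1) :=
    mul_pos (sub_pos.2 (Real.one_lt_rpow hx hq)) (by linarith)
  refine ⟨fun h => ⟨?_, ?_⟩, fun h => ?_, fun h => ⟨?_, ?_⟩⟩
  · have hlt : x ^ (p - 1) < x := Real.rpow_lt_self_of_one_lt hx (by linarith)
    rw [one_lt_div hden]
    linarith
  · rw [div_lt_div_iff₀ hden hq]
    linarith [mul_rpow_add_one_mul_sub_one_lt hq (by linarith) hx]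
  · have hpow : x ^ (p - 1) = x := by rw [h]; norm_num
    rw [hpow] at hden ⊢
    rw [div_eq_one_iff_eq hden.ne']
    ring
  · rw [div_lt_div_iff₀ hq hden]
    linarith [rpow_sub_one_mul_add_one_lt (q := p - 1) (by linarith) hx]
  · have hlt : x < x ^ (p - 1) := Real.self_lt_rpow_of_one_lt hx (by linarith)
    rw [div_lt_one hden]
    linarith
end

section
/- Let p > 1 and let a, b ∈ ℝⁿ be such that λa + (1−λ)b ≠ 0 for every λ ∈ [0,1]. Then ⟨a − b, |a|^{p−2}a − |b|^{p−2}b⟩ = |a − b|² ∫₀¹ |λa + (1−λ)b|^{p−2} dλ + (p−2) ∫₀¹ |λa + (1−λ)b|^{p−4} ⟨a − b, λa + (1−λ)b⟩² dλ. -/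
open scoped RealInnerProductSpace

/-- The derivative of a real power of the norm along a curve, away from the origin. -/
theorem HasDerivAt.norm_rpow_of_ne_zero {E : Type*} [NormedAddCommGroup E]
    [InnerProductSpace ℝ E] {f : ℝ → E} {f' : E} {x : ℝ} (hf : HasDerivAt f f' x)
    (hx : f x ≠ 0) (q : ℝ) :
    HasDerivAt (fun t => ‖f t‖ ^ q) (q * ‖f x‖ ^ (q - 2) * ⟪f x, f'⟫) x := by
  have key (r : ℝ) (t : ℝ) : (‖f t‖ ^ 2) ^ r = ‖f t‖ ^ (2 * r) := by
    rw [Real.rpow_mul (norm_nonneg _), Real.rpow_two]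
  have hd := hf.norm_sq.rpow_const (p := q / 2) (Or.inl (by simpa using hx))
  simp only [key] at hd
  convert hd using 1
  · ext t
    congr 1
    ring
  · rw [show 2 * (q / 2 - 1) = q - 2 by ring]
    ring

/-- The identity (eq9): for `p > 1` and `a b ∈ ℝⁿ` with `λa + (1-λ)b ≠ 0` for all `λ ∈ [0,1]`,
`⟪a-b, |a|^(p-2)a - |b|^(p-2)b⟫ = |a-b|² ∫₀¹ |λa+(1-λ)b|^(p-2) dλ
  + (p-2) ∫₀¹ |λa+(1-λ)b|^(p-4) ⟪a-b, λa+(1-λ)b⟫² dλ`. -/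
theorem stmt_11 (n : ℕ) (p : ℝ) (hp : 1 < p) (a b : EuclideanSpace ℝ (Fin n))
    (h : ∀ l ∈ Set.Icc (0 : ℝ) 1, l • a + (1 - l) • b ≠ 0) :
    ⟪a - b, ‖a‖ ^ (p - 2) • a - ‖b‖ ^ (p - 2) • b⟫ =
      ‖a - b‖ ^ 2 * (∫ l in (0 : ℝ)..1, ‖l • a + (1 - l) • b‖ ^ (p - 2)) +
        (p - 2) * ∫ l in (0 : ℝ)..1,
          ‖l • a + (1 - l) • b‖ ^ (p - 4) * ⟪a - b, l • a + (1 - l) • b⟫ ^ 2 := by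
  have hne : ∀ l ∈ Set.uIcc (0 : ℝ) 1, l • a + (1 - l) • b ≠ 0 := by
    rwa [Set.uIcc_of_le zero_le_one]
  have hline (l : ℝ) : HasDerivAt (fun t : ℝ => t • a + (1 - t) • b) (a - b) l := by
    refine (((hasDerivAt_id l).smul_const a).add
      (((hasDerivAt_id l).const_sub 1).smul_const b)).congr_deriv ?_
    simp [sub_eq_add_neg]
  have hcont : Continuous fun l : ℝ => l • a + (1 - l) • b := by fun_prop
  have hpow (q : ℝ) : ContinuousOn (fun l : ℝ => ‖l • a + (1 - l) • b‖ ^ q)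
      (Set.uIcc 0 1) :=
    hcont.norm.continuousOn.rpow_const fun l hl => Or.inl (norm_ne_zero_iff.2 (hne l hl))
  have hint₁ : IntervalIntegrable
      (fun l : ℝ => ‖a - b‖ ^ 2 * ‖l • a + (1 - l) • b‖ ^ (p - 2)) MeasureTheory.volume 0 1 :=
    (continuousOn_const.mul (hpow (p - 2))).intervalIntegrable
  have hint₂ : IntervalIntegrable
      (fun l : ℝ => (p - 2) *
        (‖l • a + (1 - l) • b‖ ^ (p - 4) * ⟪a - b, l • a + (1 - l) • b⟫ ^ 2))
      MeasureTheory.volume 0 1 :=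
    (continuousOn_const.mul ((hpow (p - 4)).mul
      ((continuous_const.inner hcont).pow 2).continuousOn)).intervalIntegrable
  have hderiv : ∀ l ∈ Set.uIcc (0 : ℝ) 1, HasDerivAt
      (fun t : ℝ => ‖t • a + (1 - t) • b‖ ^ (p - 2) * ⟪a - b, t • a + (1 - t) • b⟫)
      (‖a - b‖ ^ 2 * ‖l • a + (1 - l) • b‖ ^ (p - 2) + (p - 2) *
        (‖l • a + (1 - l) • b‖ ^ (p - 4) * ⟪a - b, l • a + (1 - l) • b⟫ ^ 2)) l := by
    intro l hl
    refine (((hline l).norm_rpow_of_ne_zero (hne l hl) (p - 2)).mul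
      ((hasDerivAt_const l (a - b)).inner ℝ (hline l))).congr_deriv ?_
    rw [inner_zero_left, add_zero, real_inner_self_eq_norm_sq,
      real_inner_comm (a - b) (l • a + (1 - l) • b), show p - 2 - 2 = p - 4 by ring]
    ring
  rw [← intervalIntegral.integral_const_mul, ← intervalIntegral.integral_const_mul,
    ← intervalIntegral.integral_add hint₁ hint₂,
    intervalIntegral.integral_eq_sub_of_hasDerivAt hderiv (hint₁.add hint₂)]
  simp [inner_sub_right, real_inner_smul_right]
end

section
/- Let p ≥ 2 and let a, b ∈ ℝⁿ with a ≠ b. Then ⟨a − b, |a|^{p−2}a − |b|^{p−2}b⟩ ≥ |a − b|² ∫₀¹ |λa + (1−λ)b|^{p−2} dλ. -/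
open scoped RealInnerProductSpace

/-- A continuous function on an interval has integral at most the length times any upper bound. -/
theorem intervalIntegral_le_sub_mul {h : ℝ → ℝ} (hc : Continuous h) {x y C : ℝ} (hxy : x ≤ y)
    (hC : ∀ l ∈ Set.Icc x y, h l ≤ C) : ∫ l in x..y, h l ≤ (y - x) * C := by
  simpa using intervalIntegral.integral_mono_on (μ := MeasureTheory.volume) hxy
    (hc.intervalIntegrable x y)
    (intervalIntegrable_const (c := C)) hC

/-- If `h l` is nondecreasing in `|l - m|`, then the increments of `(l - m) * h l` dominate
the integral of `h`. -/
theorem intervalIntegral_le_of_monotone_abs_sub {h : ℝ → ℝ} (hc : Continuous h) {m : ℝ}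
    (hm : ∀ s t, |s - m| ≤ |t - m| → h s ≤ h t) {x y : ℝ} (hxy : x ≤ y) :
    ∫ l in x..y, h l ≤ (y - m) * h y - (x - m) * h x := by
  have right : ∀ z, m ≤ z → z ≤ y → ∫ l in z..y, h l ≤ (y - z) * h y := fun z hz hzy =>
    intervalIntegral_le_sub_mul hc hzy fun l hl => hm l y <|
      abs_le_abs_of_nonneg (by linarith [hl.1]) (by linarith [hl.2])
  have left : ∀ z, z ≤ m → x ≤ z → ∫ l in x..z, h l ≤ (z - x) * h x := fun z hz hxz =>
    intervalIntegral_le_sub_mul hc hxz fun l hl => hm l x <|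
      abs_le_abs_of_nonpos (by linarith [hl.2]) (by linarith [hl.1])
  rcases le_total m x with hx | hx
  · have hle : h x ≤ h y := hm x y (abs_le_abs_of_nonneg (by linarith) (by linarith))
    nlinarith [right x hx hxy]
  rcases le_total y m with hy | hy
  · have hle : h y ≤ h x := hm y x (abs_le_abs_of_nonpos (by linarith) (by linarith))
    nlinarith [left y hy hxy]
  · rw [← intervalIntegral.integral_add_adjacent_intervals
      (hc.intervalIntegrable x m) (hc.intervalIntegrable m y)]
    linarith [right m le_rfl hy, left m le_rfl hx]

/-- Inequality (nb3a): for `p ≥ 2` and `a ≠ b` in `ℝⁿ`,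
`⟪a-b, |a|^(p-2)a - |b|^(p-2)b⟫ ≥ |a-b|² ∫₀¹ |λa+(1-λ)b|^(p-2) dλ`. -/
theorem stmt_12 (n : ℕ) (p : ℝ) (hp : 2 ≤ p) (a b : EuclideanSpace ℝ (Fin n)) (hab : a ≠ b) :
    ‖a - b‖ ^ 2 * (∫ l in (0 : ℝ)..1, ‖l • a + (1 - l) • b‖ ^ (p - 2)) ≤
      ⟪a - b, ‖a‖ ^ (p - 2) • a - ‖b‖ ^ (p - 2) • b⟫ := by
  have hv : ‖a - b‖ ^ 2 ≠ 0 := by simpa [sub_eq_zero] using hab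
  obtain ⟨m, hm⟩ : ∃ m : ℝ, ⟪a - b, b⟫ = -m * ‖a - b‖ ^ 2 :=
    ⟨-(⟪a - b, b⟫ / ‖a - b‖ ^ 2), by rw [neg_neg, div_mul_cancel₀ _ hv]⟩
  have ha : ⟪a - b, a⟫ = (1 - m) * ‖a - b‖ ^ 2 := by
    have := real_inner_self_eq_norm_sq (a - b)
    rw [inner_sub_right] at this
    linarith
  have hsq (l : ℝ) : ‖l • a + (1 - l) • b‖ ^ 2 =
      ‖b‖ ^ 2 + ((l - m) ^ 2 - m ^ 2) * ‖a - b‖ ^ 2 := by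
    rw [show l • a + (1 - l) • b = l • (a - b) + b by module, norm_add_sq_real,
      real_inner_smul_left, hm, norm_smul, mul_pow, Real.norm_eq_abs, sq_abs]
    ring
  have hmono (s t : ℝ) (hst : |s - m| ≤ |t - m|) :
      ‖s • a + (1 - s) • b‖ ^ (p - 2) ≤ ‖t • a + (1 - t) • b‖ ^ (p - 2) := by
    refine Real.rpow_le_rpow (norm_nonneg _) ?_ (by linarith)
    rw [← sq_le_sq₀ (norm_nonneg _) (norm_nonneg _), hsq, hsq]
    have := sq_le_sq.mpr hst
    gcongr
  have hcont : Continuous fun l : ℝ => ‖l • a + (1 - l) • b‖ ^ (p - 2) :=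
    Continuous.rpow_const (by fun_prop) fun _ => Or.inr (by linarith)
  have key := intervalIntegral_le_of_monotone_abs_sub hcont hmono zero_le_one
  simp only [one_smul, sub_self, zero_smul, add_zero, sub_zero, zero_add, zero_sub] at key
  rw [inner_sub_right, real_inner_smul_right, real_inner_smul_right, ha, hm]
  calc _ ≤ ‖a - b‖ ^ 2 * ((1 - m) * ‖a‖ ^ (p - 2) - -m * ‖b‖ ^ (p - 2)) := by gcongr
    _ = _ := by ring
end

section
/- Let 1 < p ≤ 2 and let a, b ∈ ℝⁿ with a ≠ b. Then ⟨a − b, |a|^{p−2}a − |b|^{p−2}b⟩ ≥ (p−1) |a − b|² ∫₀¹ |λa + (1−λ)b|^{p−2} dλ. -/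
open scoped RealInnerProductSpace

section

variable {E : Type*} [NormedAddCommGroup E] [InnerProductSpace ℝ E]

theorem continuous_norm_rpow_smul_self {p : ℝ} (hp : 1 < p) :
    Continuous fun x : E => ‖x‖ ^ (p - 2) • x := by
  rw [continuous_iff_continuousAt]
  intro x
  rcases eq_or_ne x 0 with rfl | hx
  · have hnorm : ∀ y : E, ‖‖y‖ ^ (p - 2) • y‖ = ‖y‖ ^ (p - 1) := by
      intro y
      rcases eq_or_ne y 0 with rfl | hy
      · simp [Real.zero_rpow (sub_pos.2 hp).ne']
      · have hy' : 0 < ‖y‖ := norm_pos_iff.2 hy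
        rw [norm_smul, Real.norm_of_nonneg (by positivity), ← Real.rpow_add_one hy'.ne']
        congr 1
        ring
    rw [ContinuousAt, smul_zero, tendsto_zero_iff_norm_tendsto_zero]
    simp only [hnorm]
    have h : Continuous fun y : E => ‖y‖ ^ (p - 1) :=
      continuous_norm.rpow_const fun _ => Or.inr (sub_pos.2 hp).le
    simpa [Real.zero_rpow (sub_pos.2 hp).ne'] using h.tendsto 0
  · exact (continuous_norm.continuousAt.rpow_const (Or.inl (norm_ne_zero_iff.2 hx))).smul
      continuousAt_id

/-- Along a line with direction `d`, the `d`-component of `‖x‖ ^ (p - 2) • x` has derivative at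
least `(p - 1) * ‖d‖ ^ 2 * ‖x‖ ^ (p - 2)` away from the origin. -/
theorem exists_hasDerivAt_inner_norm_rpow_smul_ge {p : ℝ} (hp : p ≤ 2) {c : ℝ → E} {d : E} {t : ℝ}
    (hc : HasDerivAt c d t) (h0 : c t ≠ 0) :
    ∃ g', HasDerivAt (fun s => ⟪d, ‖c s‖ ^ (p - 2) • c s⟫) g' t ∧
      (p - 1) * ‖d‖ ^ 2 * ‖c t‖ ^ (p - 2) ≤ g' := by
  have hN : 0 < ‖c t‖ ^ 2 := by positivity
  have hrpow : ∀ s, ‖c s‖ ^ (p - 2) = (‖c s‖ ^ 2) ^ ((p - 2) / 2) := by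
    intro s
    rw [← Real.rpow_natCast_mul (norm_nonneg _)]
    congr 1
    push_cast
    ring
  have hinner : HasDerivAt (fun s => ⟪d, c s⟫) (‖d‖ ^ 2) t := by
    simpa using (hasDerivAt_const t d).inner ℝ hc
  have hderiv := (hc.norm_sq.rpow_const (p := (p - 2) / 2) (Or.inl hN.ne')).mul hinner
  refine ⟨_, hderiv.congr_of_eventuallyEq (.of_forall fun s => ?_), ?_⟩
  · simp [inner_smul_right, hrpow]
  · have hsplit : (‖c t‖ ^ 2) ^ ((p - 2) / 2) =
        (‖c t‖ ^ 2) ^ ((p - 2) / 2 - 1) * ‖c t‖ ^ 2 := by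
      rw [← Real.rpow_add_one hN.ne', sub_add_cancel]
    have hcs : ⟪d, c t⟫ ^ 2 ≤ ‖d‖ ^ 2 * ‖c t‖ ^ 2 := by
      rw [← mul_pow, ← sq_abs]
      gcongr
      exact abs_real_inner_le_norm d (c t)
    rw [hrpow, hsplit, real_inner_comm]
    have hM : 0 ≤ (‖c t‖ ^ 2) ^ ((p - 2) / 2 - 1) := by positivity
    have := mul_nonneg hM (mul_nonneg (sub_nonneg.2 hp) (sub_nonneg.2 hcs))
    linarith

/-- A lower derivative bound integrates across at most one exceptional point. -/
theorem integral_le_sub_of_hasDerivAt_ge_of_ne {g φ : ℝ → ℝ} {u v s : ℝ} (huv : u ≤ v)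
    (hg : Continuous g) (hφ : IntervalIntegrable φ MeasureTheory.volume u v)
    (hderiv : ∀ t, t ≠ s → ∃ g', HasDerivAt g g' t ∧ φ t ≤ g') :
    ∫ t in u..v, φ t ≤ g v - g u := by
  have avoiding : ∀ x y, x ≤ y → s ∉ Set.Ioo x y →
      IntervalIntegrable φ MeasureTheory.volume x y → ∫ t in x..y, φ t ≤ g y - g x := by
    intro x y hxy hs hint
    have hder : ∀ t ∈ Set.Ioo x y, HasDerivAt g (deriv g t) t ∧ φ t ≤ deriv g t := by
      intro t ht
      obtain ⟨g', h, hle⟩ := hderiv t fun h => hs (h ▸ ht)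
      rw [h.deriv]
      exact ⟨h, hle⟩
    exact intervalIntegral.integral_le_sub_of_hasDeriv_right_of_le hxy hg.continuousOn
      (fun t ht => (hder t ht).1.hasDerivWithinAt)
      ((intervalIntegrable_iff_integrableOn_Icc_of_le hxy).1 hint) fun t ht => (hder t ht).2
  by_cases hs : s ∈ Set.Ioo u v
  · have hsv : s ∈ Set.uIcc u v := by
      rw [Set.uIcc_of_le huv]
      exact Set.Ioo_subset_Icc_self hs
    have h₁ : IntervalIntegrable φ MeasureTheory.volume u s :=
      hφ.mono_set (Set.uIcc_subset_uIcc_left hsv)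
    have h₂ : IntervalIntegrable φ MeasureTheory.volume s v :=
      hφ.mono_set (Set.uIcc_subset_uIcc_right hsv)
    rw [← intervalIntegral.integral_add_adjacent_intervals h₁ h₂]
    have := avoiding u s hs.1.le (by simp) h₁
    have := avoiding s v hs.2.le (by simp) h₂
    linarith
  · exact avoiding u v huv hs hφ

end

/-- Inequality (nb3b): for `1 < p ≤ 2` and `a ≠ b` in `ℝⁿ`,
`⟪a-b, |a|^(p-2)a - |b|^(p-2)b⟫ ≥ (p-1)|a-b|² ∫₀¹ |λa+(1-λ)b|^(p-2) dλ`. -/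
theorem stmt_13 (n : ℕ) (p : ℝ) (hp1 : 1 < p) (hp2 : p ≤ 2)
    (a b : EuclideanSpace ℝ (Fin n)) (hab : a ≠ b) :
    (p - 1) * ‖a - b‖ ^ 2 * (∫ l in (0 : ℝ)..1, ‖l • a + (1 - l) • b‖ ^ (p - 2)) ≤
      ⟪a - b, ‖a‖ ^ (p - 2) • a - ‖b‖ ^ (p - 2) • b⟫ := by
  set c : ℝ → EuclideanSpace ℝ (Fin n) := fun l => l • a + (1 - l) • b with hc_def
  have hc : ∀ t, HasDerivAt c (a - b) t := by
    intro t
    have h := ((hasDerivAt_id t).smul_const a).add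
      (((hasDerivAt_id t).const_sub 1).smul_const b)
    exact h.congr_deriv (by module)
  have hc_cont : Continuous c := continuous_iff_continuousAt.2 fun t => (hc t).continuousAt
  set g : ℝ → ℝ := fun s => ⟪a - b, ‖c s‖ ^ (p - 2) • c s⟫ with hg_def
  have hg : Continuous g :=
    continuous_const.inner ((continuous_norm_rpow_smul_self hp1).comp hc_cont)
  have hsub : g 1 - g 0 = ⟪a - b, ‖a‖ ^ (p - 2) • a - ‖b‖ ^ (p - 2) • b⟫ := by
    simp [hg_def, hc_def, inner_sub_right]
  obtain ⟨s, hs⟩ : ∃ s, ∀ t, t ≠ s → c t ≠ 0 := by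
    by_cases h : ∃ s, c s = 0
    · obtain ⟨s, hs⟩ := h
      refine ⟨s, fun t hts ht => hts ?_⟩
      have hz : (t - s) • (a - b) = 0 := by
        rw [show (t - s) • (a - b) = c t - c s by simp only [hc_def]; module, ht, hs, sub_zero]
      exact sub_eq_zero.1 ((smul_eq_zero.1 hz).resolve_right (sub_ne_zero.2 hab))
    · exact ⟨0, fun t _ ht => h ⟨t, ht⟩⟩
  have hderiv : ∀ t, t ≠ s → ∃ g', HasDerivAt g g' t ∧
      (p - 1) * ‖a - b‖ ^ 2 * ‖c t‖ ^ (p - 2) ≤ g' := fun t ht =>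
    exists_hasDerivAt_inner_norm_rpow_smul_ge hp2 (hc t) (hs t ht)
  rw [← hsub, ← intervalIntegral.integral_const_mul]
  by_cases hint : IntervalIntegrable (fun t => (p - 1) * ‖a - b‖ ^ 2 * ‖c t‖ ^ (p - 2))
      MeasureTheory.volume 0 1
  · exact integral_le_sub_of_hasDerivAt_ge_of_ne zero_le_one hg hint hderiv
  · rw [intervalIntegral.integral_undef hint]
    have hnonneg : ∀ t, t ≠ s → ∃ g', HasDerivAt g g' t ∧ (0 : ℝ) ≤ g' := by
      intro t ht
      obtain ⟨g', h, hle⟩ := hderiv t ht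
      have := sub_pos.2 hp1
      exact ⟨g', h, le_trans (by positivity) hle⟩
    simpa using integral_le_sub_of_hasDerivAt_ge_of_ne zero_le_one hg
      (intervalIntegrable_const (c := (0 : ℝ))) hnonneg
end

section
/- Let p ≥ 2 and let a, b ∈ ℝⁿ with |a| > |b| > 0. Then (1/(p−1)) · (|a|^{p−1} + |b|^{p−1})/(|a| + |b|) ≤ ∫₀¹ |λa + (1−λ)b|^{p−2} dλ ≤ (1/(p−1)) · (|a|^{p−1} − |b|^{p−1})/(|a| − |b|). -/
open intervalIntegral in
/-- The average of `|x| ^ q` along the segment from `-B` to `A`. -/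
lemma integral_abs_segment_rpow {q A B : ℝ} (hq : 0 ≤ q) (hA : 0 < A) (hB : 0 < B) :
    ∫ l in (0 : ℝ)..1, |(A + B) * l - B| ^ q =
      1 / (q + 1) * ((A ^ (q + 1) + B ^ (q + 1)) / (A + B)) := by
  have hcont : Continuous fun x : ℝ => |x| ^ q :=
    continuous_abs.rpow_const fun _ => Or.inr hq
  have hpos (C : ℝ) (hC : 0 < C) : ∫ x in (0 : ℝ)..C, |x| ^ q = C ^ (q + 1) / (q + 1) := by
    have h : ∫ x in (0 : ℝ)..C, |x| ^ q = ∫ x in (0 : ℝ)..C, x ^ q := by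
      refine integral_congr fun x hx => ?_
      rw [Set.uIcc_of_le hC.le] at hx
      simp only [abs_of_nonneg hx.1]
    rw [h, integral_rpow (Or.inl (by linarith)), Real.zero_rpow (by linarith), sub_zero]
  have hneg : ∫ x in (-B)..0, |x| ^ q = B ^ (q + 1) / (q + 1) := by
    rw [← hpos B hB]
    simpa using (integral_comp_neg (a := 0) (b := B) fun x : ℝ => |x| ^ q).symm
  rw [integral_comp_mul_sub (fun x : ℝ => |x| ^ q) (by positivity : A + B ≠ 0),
    mul_zero, zero_sub, mul_one, add_sub_cancel_right,
    ← integral_add_adjacent_intervals (hcont.intervalIntegrable (-B) 0)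
      (hcont.intervalIntegrable 0 A), hneg, hpos A hA, smul_eq_mul]
  field_simp
  ring

open intervalIntegral in
/-- The average of `x ^ q` along the segment from `B` to `A`. -/
lemma integral_segment_rpow {q A B : ℝ} (hq : 0 ≤ q) (hBA : B < A) :
    ∫ l in (0 : ℝ)..1, ((A - B) * l + B) ^ q =
      1 / (q + 1) * ((A ^ (q + 1) - B ^ (q + 1)) / (A - B)) := by
  have hAB : A - B ≠ 0 := sub_ne_zero.mpr hBA.ne'
  rw [integral_comp_mul_add (fun x : ℝ => x ^ q) hAB,
    mul_zero, zero_add, mul_one, sub_add_cancel, integral_rpow (Or.inl (by linarith)),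
    smul_eq_mul]
  field_simp

/-- (eq14) and (eq16): for `p ≥ 2` and `|a| > |b| > 0`,
`(1/(p-1)) (|a|^(p-1)+|b|^(p-1))/(|a|+|b|) ≤ ∫₀¹ |λa+(1-λ)b|^(p-2) dλ
  ≤ (1/(p-1)) (|a|^(p-1)-|b|^(p-1))/(|a|-|b|)`. -/
theorem stmt_15 (n : ℕ) (p : ℝ) (hp : 2 ≤ p) (a b : EuclideanSpace ℝ (Fin n))
    (hb : 0 < ‖b‖) (hba : ‖b‖ < ‖a‖) :
    1 / (p - 1) * ((‖a‖ ^ (p - 1) + ‖b‖ ^ (p - 1)) / (‖a‖ + ‖b‖)) ≤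
      (∫ l in (0 : ℝ)..1, ‖l • a + (1 - l) • b‖ ^ (p - 2)) ∧
    (∫ l in (0 : ℝ)..1, ‖l • a + (1 - l) • b‖ ^ (p - 2)) ≤
      1 / (p - 1) * ((‖a‖ ^ (p - 1) - ‖b‖ ^ (p - 1)) / (‖a‖ - ‖b‖)) := by
  have hq : 0 ≤ p - 2 := by linarith
  have hp1 : p - 2 + 1 = p - 1 := by ring
  have hint : IntervalIntegrable (fun l : ℝ => ‖l • a + (1 - l) • b‖ ^ (p - 2))
      MeasureTheory.volume 0 1 :=
    ((by fun_prop : Continuous fun l : ℝ => ‖l • a + (1 - l) • b‖).rpow_const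
      fun _ => Or.inr hq).intervalIntegrable 0 1
  have hnorm (l : ℝ) (hl : l ∈ Set.Icc (0 : ℝ) 1) :
      ‖l • a‖ = l * ‖a‖ ∧ ‖(1 - l) • b‖ = (1 - l) * ‖b‖ := by
    rw [norm_smul, norm_smul, Real.norm_of_nonneg hl.1, Real.norm_of_nonneg (sub_nonneg.2 hl.2)]
    exact ⟨rfl, rfl⟩
  constructor
  · rw [← hp1, ← integral_abs_segment_rpow hq (hb.trans hba) hb]
    refine intervalIntegral.integral_mono_on zero_le_one
      (((by fun_prop : Continuous fun l : ℝ => |(‖a‖ + ‖b‖) * l - ‖b‖|).rpow_const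
        fun _ => Or.inr hq).intervalIntegrable 0 1) hint fun l hl => ?_
    refine Real.rpow_le_rpow (abs_nonneg _) ?_ hq
    have h := abs_norm_sub_norm_le (l • a) (-((1 - l) • b))
    rw [norm_neg, sub_neg_eq_add, (hnorm l hl).1, (hnorm l hl).2] at h
    convert h using 2
    ring
  · rw [← hp1, ← integral_segment_rpow hq hba]
    refine intervalIntegral.integral_mono_on zero_le_one hint
      (((by fun_prop : Continuous fun l : ℝ => (‖a‖ - ‖b‖) * l + ‖b‖).rpow_const
        fun _ => Or.inr hq).intervalIntegrable 0 1) fun l hl => ?_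
    refine Real.rpow_le_rpow (norm_nonneg _) ?_ hq
    have h := norm_add_le (l • a) ((1 - l) • b)
    rw [(hnorm l hl).1, (hnorm l hl).2] at h
    linarith
end

section
/- Let 1 < p < 2 and let a, b ∈ ℝⁿ with |a| > |b| > 0. Then (1/(p−1)) · (|a|^{p−1} − |b|^{p−1})/(|a| − |b|) ≤ ∫₀¹ |λa + (1−λ)b|^{p−2} dλ ≤ (1/(p−1)) · (|a|^{p−1} + |b|^{p−1})/(|a| + |b|). -/
open MeasureTheory Set

theorem intervalIntegrable_abs_rpow {r : ℝ} (hr : -1 < r) (x y : ℝ) :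
    IntervalIntegrable (fun u : ℝ => |u| ^ r) volume x y := by
  have nonneg_end : ∀ z : ℝ, 0 ≤ z → IntervalIntegrable (fun u : ℝ => |u| ^ r) volume 0 z := by
    intro z hz
    refine (intervalIntegral.intervalIntegrable_rpow' (a := 0) (b := z) hr).congr ?_
    intro u hu
    rw [uIoc_of_le hz] at hu
    simp only [abs_of_pos hu.1]
  have all_ends : ∀ z : ℝ, IntervalIntegrable (fun u : ℝ => |u| ^ r) volume 0 z := by
    intro z
    rcases le_total 0 z with hz | hz
    · exact nonneg_end z hz
    · rw [IntervalIntegrable.iff_comp_neg]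
      simpa using nonneg_end (-z) (by linarith)
  exact (all_ends x).symm.trans (all_ends y)

theorem integral_zero_abs_rpow {r : ℝ} (hr : -1 < r) {z : ℝ} (hz : 0 ≤ z) :
    ∫ u in (0 : ℝ)..z, |u| ^ r = z ^ (r + 1) / (r + 1) := by
  have h : ∫ u in (0 : ℝ)..z, |u| ^ r = ∫ u in (0 : ℝ)..z, u ^ r := by
    refine intervalIntegral.integral_congr fun u hu => ?_
    rw [uIcc_of_le hz] at hu
    simp only [abs_of_nonneg hu.1]
  rw [h, integral_rpow (Or.inl hr), Real.zero_rpow (by linarith), sub_zero]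

theorem integral_neg_abs_rpow {r : ℝ} (hr : -1 < r) {x y : ℝ} (hx : 0 ≤ x) (hy : 0 ≤ y) :
    ∫ u in (-x)..y, |u| ^ r = (y ^ (r + 1) + x ^ (r + 1)) / (r + 1) := by
  have h : ∫ u in (-x)..0, |u| ^ r = ∫ u in (0 : ℝ)..x, |u| ^ r := by
    simpa using (intervalIntegral.integral_comp_neg (a := 0) (b := x)
      (fun u : ℝ => |u| ^ r)).symm
  rw [← intervalIntegral.integral_add_adjacent_intervals
      (intervalIntegrable_abs_rpow hr (-x) 0) (intervalIntegrable_abs_rpow hr 0 y), h,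
    integral_zero_abs_rpow hr hx, integral_zero_abs_rpow hr hy]
  ring


/-- (eq17) and (eq18): for `1 < p < 2` and `|a| > |b| > 0`,
`(1/(p-1)) (|a|^(p-1)-|b|^(p-1))/(|a|-|b|) ≤ ∫₀¹ |λa+(1-λ)b|^(p-2) dλ
  ≤ (1/(p-1)) (|a|^(p-1)+|b|^(p-1))/(|a|+|b|)`. -/
theorem stmt_16 (n : ℕ) (p : ℝ) (hp1 : 1 < p) (hp2 : p < 2) (a b : EuclideanSpace ℝ (Fin n))
    (hb : 0 < ‖b‖) (hba : ‖b‖ < ‖a‖) :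
    1 / (p - 1) * ((‖a‖ ^ (p - 1) - ‖b‖ ^ (p - 1)) / (‖a‖ - ‖b‖)) ≤
      (∫ l in (0 : ℝ)..1, ‖l • a + (1 - l) • b‖ ^ (p - 2)) ∧
    (∫ l in (0 : ℝ)..1, ‖l • a + (1 - l) • b‖ ^ (p - 2)) ≤
      1 / (p - 1) * ((‖a‖ ^ (p - 1) + ‖b‖ ^ (p - 1)) / (‖a‖ + ‖b‖)) := by
  have hr : -1 < p - 2 := by linarith
  have hr1 : p - 2 + 1 = p - 1 := by ring
  have hp : p - 1 ≠ 0 := by linarith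
  have ha : 0 < ‖a‖ := hb.trans hba
  have hsum : 0 < ‖a‖ + ‖b‖ := by linarith
  have hdiff : 0 < ‖a‖ - ‖b‖ := by linarith
  have segment_pos : ∀ l ∈ Icc (0 : ℝ) 1, 0 < (‖a‖ - ‖b‖) * l + ‖b‖ := fun l hl => by
    nlinarith [mul_nonneg hdiff.le hl.1]
  have upper_integrable : IntervalIntegrable
      (fun l : ℝ => |(‖a‖ + ‖b‖) * l - ‖b‖| ^ (p - 2)) volume 0 1 := by
    have h := ((intervalIntegrable_abs_rpow hr (-‖b‖) ‖a‖).comp_sub_right ‖b‖).comp_mul_left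
      (c := ‖a‖ + ‖b‖)
    simpa [hsum.ne'] using h
  have upper_integral : ∫ l in (0 : ℝ)..1, |(‖a‖ + ‖b‖) * l - ‖b‖| ^ (p - 2) =
      1 / (p - 1) * ((‖a‖ ^ (p - 1) + ‖b‖ ^ (p - 1)) / (‖a‖ + ‖b‖)) := by
    rw [intervalIntegral.integral_comp_mul_sub (fun u : ℝ => |u| ^ (p - 2)) hsum.ne']
    simp only [mul_zero, mul_one, zero_sub, add_sub_cancel_right]
    rw [integral_neg_abs_rpow hr hb.le ha.le, hr1, smul_eq_mul]
    field_simp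
  have lower_integrable : IntervalIntegrable
      (fun l : ℝ => ((‖a‖ - ‖b‖) * l + ‖b‖) ^ (p - 2)) volume 0 1 := by
    refine ContinuousOn.intervalIntegrable_of_Icc zero_le_one ?_
    exact ContinuousOn.rpow_const (by fun_prop) fun l hl => Or.inl (segment_pos l hl).ne'
  have lower_integral : ∫ l in (0 : ℝ)..1, ((‖a‖ - ‖b‖) * l + ‖b‖) ^ (p - 2) =
      1 / (p - 1) * ((‖a‖ ^ (p - 1) - ‖b‖ ^ (p - 1)) / (‖a‖ - ‖b‖)) := by
    rw [intervalIntegral.integral_comp_mul_add (fun u : ℝ => u ^ (p - 2)) hdiff.ne']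
    simp only [mul_zero, mul_one, zero_add, sub_add_cancel]
    rw [integral_rpow (Or.inl hr), hr1, smul_eq_mul]
    field_simp
  have bounds : ∀ᵐ l ∂(volume.restrict (Icc (0 : ℝ) 1)),
      ((‖a‖ - ‖b‖) * l + ‖b‖) ^ (p - 2) ≤ ‖l • a + (1 - l) • b‖ ^ (p - 2) ∧
      ‖l • a + (1 - l) • b‖ ^ (p - 2) ≤ |(‖a‖ + ‖b‖) * l - ‖b‖| ^ (p - 2) := by
    filter_upwards [ae_restrict_mem measurableSet_Icc,
      ae_restrict_of_ae (Measure.ae_ne volume (‖b‖ / (‖a‖ + ‖b‖)))] with l hl hne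
    have hla : ‖l • a‖ = l * ‖a‖ := by rw [norm_smul, Real.norm_of_nonneg hl.1]
    have hlb : ‖(1 - l) • b‖ = (1 - l) * ‖b‖ := by
      rw [norm_smul, Real.norm_of_nonneg (by linarith [hl.2])]
    have habs : 0 < |(‖a‖ + ‖b‖) * l - ‖b‖| := by
      rw [abs_pos]
      intro h
      apply hne
      rw [eq_div_iff hsum.ne']
      linarith
    have hle : |(‖a‖ + ‖b‖) * l - ‖b‖| ≤ ‖l • a + (1 - l) • b‖ := by
      have h := abs_norm_sub_norm_le (l • a) (-((1 - l) • b))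
      rw [norm_neg, sub_neg_eq_add, hla, hlb] at h
      convert h using 2
      ring
    have hge : ‖l • a + (1 - l) • b‖ ≤ (‖a‖ - ‖b‖) * l + ‖b‖ := by
      have h := norm_add_le (l • a) ((1 - l) • b)
      rw [hla, hlb] at h
      linarith
    exact ⟨Real.rpow_le_rpow_of_nonpos (habs.trans_le hle) hge (by linarith),
      Real.rpow_le_rpow_of_nonpos habs hle (by linarith)⟩
  have norm_integrable : IntervalIntegrable
      (fun l : ℝ => ‖l • a + (1 - l) • b‖ ^ (p - 2)) volume 0 1 := by
    refine upper_integrable.mono_fun ?_ ?_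
    · exact Measurable.aestronglyMeasurable
        ((Continuous.measurable (by fun_prop)).pow_const _)
    · rw [uIoc_of_le zero_le_one]
      filter_upwards [ae_restrict_of_ae_restrict_of_subset Ioc_subset_Icc_self bounds] with l hl
      rw [Real.norm_of_nonneg (by positivity), Real.norm_of_nonneg (by positivity)]
      exact hl.2
  rw [← lower_integral, ← upper_integral]
  exact ⟨intervalIntegral.integral_mono_ae_restrict zero_le_one lower_integrable norm_integrable
      (bounds.mono fun _ h => h.1),
    intervalIntegral.integral_mono_ae_restrict zero_le_one norm_integrable upper_integrable
      (bounds.mono fun _ h => h.2)⟩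
end

section
/- Let p ≥ 2. Then there exist constants C7, C8 > 0, depending only on p, such that for all a, b ∈ ℝⁿ not both zero, C7 · (|a|^{p−2} + |b|^{p−2}) ≤ ∫₀¹ |λa + (1−λ)b|^{p−2} dλ ≤ C8 · (|a|^{p−2} + |b|^{p−2}). -/
section SegmentIntegral

variable {E : Type*} [NormedAddCommGroup E] [NormedSpace ℝ E] {q : ℝ}

lemma continuous_norm_segment_rpow (hq : 0 ≤ q) (a b : E) :
    Continuous fun l : ℝ => ‖l • a + (1 - l) • b‖ ^ q :=
  (by fun_prop : Continuous fun l : ℝ => ‖l • a + (1 - l) • b‖).rpow_const fun _ => Or.inr hq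

lemma segment_integral_norm_rpow_comm (a b : E) :
    ∫ l in (0 : ℝ)..1, ‖l • a + (1 - l) • b‖ ^ q =
      ∫ l in (0 : ℝ)..1, ‖l • b + (1 - l) • a‖ ^ q := by
  have h := intervalIntegral.integral_comp_sub_left (a := 0) (b := 1)
    (fun l : ℝ => ‖l • b + (1 - l) • a‖ ^ q) 1
  simpa [add_comm] using h

lemma norm_segment_rpow_le (hq : 0 ≤ q) (a b : E) {l : ℝ} (h0 : 0 ≤ l) (h1 : l ≤ 1) :
    ‖l • a + (1 - l) • b‖ ^ q ≤ ‖a‖ ^ q + ‖b‖ ^ q := by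
  have hmax : ‖l • a + (1 - l) • b‖ ≤ max ‖a‖ ‖b‖ := by
    refine (norm_add_le _ _).trans ?_
    rw [norm_smul, norm_smul, Real.norm_of_nonneg h0, Real.norm_of_nonneg (sub_nonneg.mpr h1)]
    nlinarith [le_max_left ‖a‖ ‖b‖, le_max_right ‖a‖ ‖b‖]
  refine (Real.rpow_le_rpow (norm_nonneg _) hmax hq).trans ?_
  rcases max_cases ‖a‖ ‖b‖ with ⟨h, -⟩ | ⟨h, -⟩ <;> rw [h]
  · exact le_add_of_nonneg_right (by positivity)
  · exact le_add_of_nonneg_left (by positivity)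

lemma segment_integral_norm_rpow_le (hq : 0 ≤ q) (a b : E) :
    ∫ l in (0 : ℝ)..1, ‖l • a + (1 - l) • b‖ ^ q ≤ ‖a‖ ^ q + ‖b‖ ^ q := by
  have h := intervalIntegral.integral_mono_on (zero_le_one' ℝ)
    ((continuous_norm_segment_rpow hq a b).intervalIntegrable (μ := MeasureTheory.volume) 0 1)
    (intervalIntegrable_const (c := ‖a‖ ^ q + ‖b‖ ^ q))
    fun l hl => norm_segment_rpow_le hq a b hl.1 hl.2
  simpa using h

/-- On `[3/4, 1]` the segment stays at distance at least `‖a‖ / 2` from the origin. -/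
lemma segment_integral_norm_rpow_lower_bound_of_norm_le (hq : 0 ≤ q) {a b : E}
    (hab : ‖b‖ ≤ ‖a‖) :
    (1 / 2) ^ q / 8 * (‖a‖ ^ q + ‖b‖ ^ q) ≤
      ∫ l in (0 : ℝ)..1, ‖l • a + (1 - l) • b‖ ^ q := by
  have hint (s t : ℝ) := (continuous_norm_segment_rpow hq a b).intervalIntegrable
    (μ := MeasureTheory.volume) s t
  have hpt : ∀ l ∈ Set.Icc (3 / 4 : ℝ) 1,
      (1 / 2 * ‖a‖) ^ q ≤ ‖l • a + (1 - l) • b‖ ^ q := by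
    rintro l ⟨hl, hl1⟩
    refine Real.rpow_le_rpow (by positivity) ?_ hq
    have h := norm_sub_le_norm_add (l • a) ((1 - l) • b)
    rw [norm_smul, norm_smul, Real.norm_of_nonneg (by linarith : (0 : ℝ) ≤ l),
      Real.norm_of_nonneg (sub_nonneg.mpr hl1)] at h
    nlinarith [norm_nonneg a, norm_nonneg b]
  have hright := intervalIntegral.integral_mono_on (by norm_num : (3 / 4 : ℝ) ≤ 1)
    intervalIntegrable_const (hint _ _) hpt
  have hleft : 0 ≤ ∫ l in (0 : ℝ)..(3 / 4), ‖l • a + (1 - l) • b‖ ^ q :=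
    intervalIntegral.integral_nonneg (by norm_num) fun l _ => by positivity
  rw [intervalIntegral.integral_const, smul_eq_mul,
    Real.mul_rpow (by norm_num) (norm_nonneg a)] at hright
  rw [← intervalIntegral.integral_add_adjacent_intervals (hint 0 (3 / 4)) (hint _ 1)]
  have hba : ‖b‖ ^ q ≤ ‖a‖ ^ q := Real.rpow_le_rpow (norm_nonneg b) hab hq
  have hhalf : (0 : ℝ) < (1 / 2) ^ q := by positivity
  nlinarith [mul_le_mul_of_nonneg_left hba hhalf.le]

lemma segment_integral_norm_rpow_lower_bound (hq : 0 ≤ q) (a b : E) :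
    (1 / 2) ^ q / 8 * (‖a‖ ^ q + ‖b‖ ^ q) ≤
      ∫ l in (0 : ℝ)..1, ‖l • a + (1 - l) • b‖ ^ q := by
  rcases le_total ‖b‖ ‖a‖ with h | h
  · exact segment_integral_norm_rpow_lower_bound_of_norm_le hq h
  · rw [segment_integral_norm_rpow_comm, add_comm (‖a‖ ^ q)]
    exact segment_integral_norm_rpow_lower_bound_of_norm_le hq h

end SegmentIntegral

/-- (nb6a): for `p ≥ 2` there are constants `C7, C8 > 0` depending only on `p` such that
for all `a, b ∈ ℝⁿ` not both zero,
`C7 (|a|^(p-2)+|b|^(p-2)) ≤ ∫₀¹ |λa+(1-λ)b|^(p-2) dλ ≤ C8 (|a|^(p-2)+|b|^(p-2))`. -/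
theorem stmt_17 (p : ℝ) (hp : 2 ≤ p) :
    ∃ C7 C8 : ℝ, 0 < C7 ∧ 0 < C8 ∧
      ∀ (n : ℕ) (a b : EuclideanSpace ℝ (Fin n)), (a ≠ 0 ∨ b ≠ 0) →
        C7 * (‖a‖ ^ (p - 2) + ‖b‖ ^ (p - 2)) ≤
          (∫ l in (0 : ℝ)..1, ‖l • a + (1 - l) • b‖ ^ (p - 2)) ∧
        (∫ l in (0 : ℝ)..1, ‖l • a + (1 - l) • b‖ ^ (p - 2)) ≤
          C8 * (‖a‖ ^ (p - 2) + ‖b‖ ^ (p - 2)) := by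
  have hq : 0 ≤ p - 2 := sub_nonneg.mpr hp
  refine ⟨(1 / 2) ^ (p - 2) / 8, 1, by positivity, one_pos, fun n a b _ => ⟨?_, ?_⟩⟩
  · exact segment_integral_norm_rpow_lower_bound hq a b
  · rw [one_mul]
    exact segment_integral_norm_rpow_le hq a b
end

section
/- Let 1 < p ≤ 2. Then there exist constants C7, C8 > 0, depending only on p, such that for all a, b ∈ ℝⁿ not both zero, C7 · (|a|^{2−p} + |b|^{2−p})^{−1} ≤ ∫₀¹ |λa + (1−λ)b|^{p−2} dλ ≤ C8 · (|a|^{2−p} + |b|^{2−p})^{−1}. -/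
open MeasureTheory Set

lemma intervalIntegrable_abs_rpow_zero {r : ℝ} (hr : -1 < r) {B : ℝ} (hB : 0 ≤ B) :
    IntervalIntegrable (fun u : ℝ => |u| ^ r) volume 0 B := by
  refine (intervalIntegral.intervalIntegrable_rpow' hr).congr ?_
  intro u hu
  rw [uIoc_of_le hB] at hu
  simp only [abs_of_pos hu.1]

lemma integral_abs_rpow_zero {r : ℝ} (hr : -1 < r) {B : ℝ} (hB : 0 ≤ B) :
    ∫ u in (0 : ℝ)..B, |u| ^ r = B ^ (r + 1) / (r + 1) := by
  have h : ∫ u in (0 : ℝ)..B, |u| ^ r = ∫ u in (0 : ℝ)..B, u ^ r := by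
    refine intervalIntegral.integral_congr fun u hu => ?_
    rw [uIcc_of_le hB] at hu
    simp only [abs_of_nonneg hu.1]
  rw [h, integral_rpow (Or.inl hr), Real.zero_rpow (by linarith), sub_zero]

lemma intervalIntegrable_abs_rpow_neg {r : ℝ} (hr : -1 < r) {A B : ℝ} (hA : 0 ≤ A)
    (hB : 0 ≤ B) : IntervalIntegrable (fun u : ℝ => |u| ^ r) volume (-B) A := by
  refine IntervalIntegrable.trans (b := 0) ?_ (intervalIntegrable_abs_rpow_zero hr hA)
  rw [IntervalIntegrable.iff_comp_neg]
  simpa using (intervalIntegrable_abs_rpow_zero hr hB).symm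

lemma integral_abs_rpow_neg {r : ℝ} (hr : -1 < r) {A B : ℝ} (hA : 0 ≤ A) (hB : 0 ≤ B) :
    ∫ u in (-B)..A, |u| ^ r = (A ^ (r + 1) + B ^ (r + 1)) / (r + 1) := by
  have hneg : ∫ u in (-B)..0, |u| ^ r = B ^ (r + 1) / (r + 1) := by
    rw [← integral_abs_rpow_zero hr hB]
    simpa using (intervalIntegral.integral_comp_neg (a := 0) (b := B)
      (fun u : ℝ => |u| ^ r)).symm
  have hl : IntervalIntegrable (fun u : ℝ => |u| ^ r) volume (-B) 0 :=
    intervalIntegrable_abs_rpow_neg hr le_rfl hB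
  rw [← intervalIntegral.integral_add_adjacent_intervals hl
    (intervalIntegrable_abs_rpow_zero hr hA), hneg, integral_abs_rpow_zero hr hA]
  ring

lemma intervalIntegrable_abs_affine_rpow {r : ℝ} (hr : -1 < r) {A B : ℝ} (hA : 0 ≤ A)
    (hB : 0 ≤ B) (hAB : 0 < A + B) :
    IntervalIntegrable (fun l : ℝ => |(A + B) * l - B| ^ r) volume 0 1 := by
  have h := ((intervalIntegrable_abs_rpow_neg hr hA hB).comp_sub_right B).comp_mul_left
    (c := A + B)
  simpa [hAB.ne'] using h

lemma integral_abs_affine_rpow {r : ℝ} (hr : -1 < r) {A B : ℝ} (hA : 0 ≤ A)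
    (hB : 0 ≤ B) (hAB : 0 < A + B) :
    ∫ l in (0 : ℝ)..1, |(A + B) * l - B| ^ r =
      (A + B)⁻¹ * ((A ^ (r + 1) + B ^ (r + 1)) / (r + 1)) := by
  rw [intervalIntegral.integral_comp_mul_sub (fun u : ℝ => |u| ^ r) hAB.ne' B,
    ← integral_abs_rpow_neg hr hA hB]
  simp

lemma abs_affine_le_norm_segment {E : Type*} [NormedAddCommGroup E] [NormedSpace ℝ E]
    (a b : E) {l : ℝ} (h0 : 0 ≤ l) (h1 : l ≤ 1) :
    |(‖a‖ + ‖b‖) * l - ‖b‖| ≤ ‖l • a + (1 - l) • b‖ := by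
  have h := abs_norm_sub_norm_le (l • a) (-((1 - l) • b))
  rw [norm_neg, norm_smul, norm_smul, sub_neg_eq_add, Real.norm_of_nonneg h0,
    Real.norm_of_nonneg (sub_nonneg.2 h1)] at h
  convert h using 2
  ring

lemma norm_segment_le_add {E : Type*} [NormedAddCommGroup E] [NormedSpace ℝ E]
    (a b : E) {l : ℝ} (h0 : 0 ≤ l) (h1 : l ≤ 1) :
    ‖l • a + (1 - l) • b‖ ≤ ‖a‖ + ‖b‖ := by
  have h := norm_add_le (l • a) ((1 - l) • b)
  rw [norm_smul, norm_smul, Real.norm_of_nonneg h0, Real.norm_of_nonneg (sub_nonneg.2 h1)] at h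
  nlinarith [norm_nonneg a, norm_nonneg b]

/-- Away from the single zero of the affine minorant, the power of the norm along a segment is
squeezed between a constant and the corresponding power of the minorant. -/
lemma ae_norm_segment_rpow_bounds {E : Type*} [NormedAddCommGroup E] [NormedSpace ℝ E]
    {r : ℝ} (hr : r ≤ 0) (a b : E) (hab : 0 < ‖a‖ + ‖b‖) :
    ∀ᵐ l ∂(volume.restrict (Icc (0 : ℝ) 1)),
      (‖a‖ + ‖b‖) ^ r ≤ ‖l • a + (1 - l) • b‖ ^ r ∧
        ‖l • a + (1 - l) • b‖ ^ r ≤ |(‖a‖ + ‖b‖) * l - ‖b‖| ^ r := by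
  rw [ae_restrict_iff' measurableSet_Icc]
  filter_upwards [Measure.ae_ne volume (‖b‖ / (‖a‖ + ‖b‖))] with l hne hl
  have hpos : 0 < |(‖a‖ + ‖b‖) * l - ‖b‖| := by
    refine abs_pos.2 fun h => hne ?_
    rw [eq_div_iff hab.ne']
    linarith
  have hle := abs_affine_le_norm_segment a b hl.1 hl.2
  exact ⟨Real.rpow_le_rpow_of_nonpos (hpos.trans_le hle) (norm_segment_le_add a b hl.1 hl.2) hr,
    Real.rpow_le_rpow_of_nonpos hpos hle hr⟩

lemma intervalIntegrable_norm_segment_rpow {E : Type*} [NormedAddCommGroup E] [NormedSpace ℝ E]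
    {r : ℝ} (hr : -1 < r) (hr0 : r ≤ 0) (a b : E) (hab : 0 < ‖a‖ + ‖b‖) :
    IntervalIntegrable (fun l : ℝ => ‖l • a + (1 - l) • b‖ ^ r) volume 0 1 := by
  have hg := intervalIntegrable_abs_affine_rpow hr (norm_nonneg a) (norm_nonneg b) hab
  refine hg.mono_fun' ?_ ?_
  · have hc : Continuous fun l : ℝ => ‖l • a + (1 - l) • b‖ := by fun_prop
    exact (hc.measurable.pow_const r).aestronglyMeasurable
  · rw [uIoc_of_le zero_le_one]
    filter_upwards [ae_restrict_of_ae_restrict_of_subset Ioc_subset_Icc_self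
      (ae_norm_segment_rpow_bounds hr0 a b hab)] with l hl
    rw [Real.norm_of_nonneg (by positivity)]
    exact hl.2

lemma rpow_add_rpow_mul_rpow_add_rpow_le {s A B : ℝ} (hs : 0 ≤ s) (hs1 : s ≤ 1) (hA : 0 ≤ A)
    (hB : 0 ≤ B) (hAB : 0 < A + B) :
    (A ^ (1 - s) + B ^ (1 - s)) * (A ^ s + B ^ s) ≤ 4 * (A + B) := by
  have bound : ∀ t : ℝ, 0 ≤ t → A ^ t + B ^ t ≤ 2 * (A + B) ^ t := fun t ht => by
    have h₁ := Real.rpow_le_rpow hA (le_add_of_nonneg_right hB) ht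
    have h₂ := Real.rpow_le_rpow hB (le_add_of_nonneg_left hA) ht
    linarith
  calc _ ≤ (2 * (A + B) ^ (1 - s)) * (2 * (A + B) ^ s) :=
        mul_le_mul (bound _ (sub_nonneg.2 hs1)) (bound _ hs) (by positivity) (by positivity)
    _ = 4 * ((A + B) ^ (1 - s) * (A + B) ^ s) := by ring
    _ = 4 * (A + B) := by rw [← Real.rpow_add hAB, sub_add_cancel, Real.rpow_one]


/-- (nb6b): for `1 < p ≤ 2` there are constants `C7, C8 > 0` depending only on `p` such that
for all `a, b ∈ ℝⁿ` not both zero,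
`C7 (|a|^(2-p)+|b|^(2-p))⁻¹ ≤ ∫₀¹ |λa+(1-λ)b|^(p-2) dλ ≤ C8 (|a|^(2-p)+|b|^(2-p))⁻¹`. -/
theorem stmt_18 (p : ℝ) (hp1 : 1 < p) (hp2 : p ≤ 2) :
    ∃ C7 C8 : ℝ, 0 < C7 ∧ 0 < C8 ∧
      ∀ (n : ℕ) (a b : EuclideanSpace ℝ (Fin n)), (a ≠ 0 ∨ b ≠ 0) →
        C7 * (‖a‖ ^ (2 - p) + ‖b‖ ^ (2 - p))⁻¹ ≤
          (∫ l in (0 : ℝ)..1, ‖l • a + (1 - l) • b‖ ^ (p - 2)) ∧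
        (∫ l in (0 : ℝ)..1, ‖l • a + (1 - l) • b‖ ^ (p - 2)) ≤
          C8 * (‖a‖ ^ (2 - p) + ‖b‖ ^ (2 - p))⁻¹ := by
  refine ⟨1, 4 / (p - 1), one_pos, div_pos four_pos (by linarith), fun n a b hne => ?_⟩
  have hab : 0 < ‖a‖ + ‖b‖ := by
    rcases hne with h | h
    · exact add_pos_of_pos_of_nonneg (norm_pos_iff.2 h) (norm_nonneg b)
    · exact add_pos_of_nonneg_of_pos (norm_nonneg a) (norm_pos_iff.2 h)
  have hr : -1 < p - 2 := by linarith
  have hr0 : p - 2 ≤ 0 := by linarith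
  have hint := intervalIntegrable_norm_segment_rpow hr hr0 a b hab
  have hae := ae_norm_segment_rpow_bounds hr0 a b hab
  have hsub : (‖a‖ + ‖b‖) ^ (2 - p) ≤ ‖a‖ ^ (2 - p) + ‖b‖ ^ (2 - p) :=
    Real.rpow_add_le_add_rpow (norm_nonneg a) (norm_nonneg b) (by linarith) (by linarith)
  have hspos : 0 < ‖a‖ ^ (2 - p) + ‖b‖ ^ (2 - p) := (Real.rpow_pos_of_pos hab _).trans_le hsub
  constructor
  · calc 1 * (‖a‖ ^ (2 - p) + ‖b‖ ^ (2 - p))⁻¹ ≤ ((‖a‖ + ‖b‖) ^ (2 - p))⁻¹ := by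
          rw [one_mul]
          exact inv_anti₀ (Real.rpow_pos_of_pos hab _) hsub
      _ = ∫ _ in (0 : ℝ)..1, (‖a‖ + ‖b‖) ^ (p - 2) := by
          rw [← Real.rpow_neg hab.le, neg_sub]
          simp
      _ ≤ _ := intervalIntegral.integral_mono_ae_restrict zero_le_one
          intervalIntegrable_const hint (hae.mono fun _ h => h.1)
  · calc _ ≤ ∫ l in (0 : ℝ)..1, |(‖a‖ + ‖b‖) * l - ‖b‖| ^ (p - 2) :=
          intervalIntegral.integral_mono_ae_restrict zero_le_one hint
            (intervalIntegrable_abs_affine_rpow hr (norm_nonneg a) (norm_nonneg b) hab)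
            (hae.mono fun _ h => h.2)
      _ = (‖a‖ ^ (p - 1) + ‖b‖ ^ (p - 1)) / ((‖a‖ + ‖b‖) * (p - 1)) := by
          rw [integral_abs_affine_rpow hr (norm_nonneg a) (norm_nonneg b) hab,
            show p - 2 + 1 = p - 1 by ring, ← div_div, inv_mul_eq_div, div_right_comm]
      _ ≤ 4 / (p - 1) * (‖a‖ ^ (2 - p) + ‖b‖ ^ (2 - p))⁻¹ := by
          have key := rpow_add_rpow_mul_rpow_add_rpow_le (s := 2 - p) (by linarith) (by linarith)
            (norm_nonneg a) (norm_nonneg b) hab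
          rw [show 1 - (2 - p) = p - 1 by ring] at key
          have hp : 0 < p - 1 := by linarith
          rw [← div_eq_mul_inv, div_div, div_le_div_iff₀ (by positivity) (by positivity)]
          nlinarith
end
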